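/- arXiv:2410.06148 — 3 statements merged into one kernel-verified Lean document; each statement's English description precedes it below -/
import Mathlib

section
/- Let n be an integer, let F be a forest on n vertices with maximum degree Δ, and let c : E(K_n) → {−1, +1} be a balanced colouring of the edges of the complete graph K_n. Then there exists a copy F' of F in K_n such that |c(F')| ≤ Δ/2 + 18. -/
open Finset

def bval {α : Type*} [Fintype α] (A C : α → α → ℤ) (g : Equiv.Perm α) : ℤ :=
  ∑ v, ∑ w, A v w * C (g v) (g w)

lemma sum_split2 {α : Type*} [Fintype α] [DecidableEq α] (u l : α) (h : u ≠ l) (f : α → ℤ) :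
    ∑ v, f v = f u + f l + ∑ v ∈ univ \ {u, l}, f v := by
  rw [← Finset.sum_sdiff (Finset.subset_univ ({u, l} : Finset α)), Finset.sum_pair h]
  ring

lemma swap_diff {α : Type*} [Fintype α] [DecidableEq α] (A C : α → α → ℤ)
    (hAs : ∀ v w, A v w = A w v) (hA0 : ∀ v, A v v = 0)
    (hCs : ∀ v w, C v w = C w v) (hC0 : ∀ v, C v v = 0)
    (u l : α) (h : u ≠ l) (g : Equiv.Perm α) :
    bval A C g - bval A C (g * Equiv.swap u l) =
      2 * ∑ w ∈ univ \ {u, l}, (A u w - A l w) * (C (g u) (g w) - C (g l) (g w)) := by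
  have hsw : ∀ w ∈ univ \ ({u, l} : Finset α), Equiv.swap u l w = w := by
    intro w hw
    simp at hw
    exact Equiv.swap_apply_of_ne_of_ne (by tauto) (by tauto)
  have key : ∀ g : Equiv.Perm α, bval A C g = 2 * A u l * C (g u) (g l)
      + 2 * ∑ w ∈ univ \ {u, l}, A u w * C (g u) (g w)
      + 2 * ∑ w ∈ univ \ {u, l}, A l w * C (g l) (g w)
      + ∑ v ∈ univ \ {u, l}, ∑ w ∈ univ \ {u, l}, A v w * C (g v) (g w) := by
    intro g
    unfold bval
    rw [sum_split2 u l h]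
    simp only [sum_split2 u l h]
    simp only [Finset.sum_add_distrib, hA0, hC0]
    rw [Finset.sum_congr rfl (fun w _ => by rw [hAs w u, hCs (g w) (g u)] :
      ∀ w ∈ univ \ ({u, l} : Finset α), A w u * C (g w) (g u) = A u w * C (g u) (g w))]
    rw [Finset.sum_congr rfl (fun w _ => by rw [hAs w l, hCs (g w) (g l)] :
      ∀ w ∈ univ \ ({u, l} : Finset α), A w l * C (g w) (g l) = A l w * C (g l) (g w))]
    rw [hAs l u, hCs (g l) (g u)]
    ring
  rw [key g, key (g * Equiv.swap u l)]
  have e1 : ∑ w ∈ univ \ {u, l}, A u w * C ((g * Equiv.swap u l) u) ((g * Equiv.swap u l) w)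
      = ∑ w ∈ univ \ {u, l}, A u w * C (g l) (g w) := by
    apply Finset.sum_congr rfl
    intro w hw
    simp only [Equiv.Perm.mul_apply, hsw w hw, Equiv.swap_apply_left]
  have e2 : ∑ w ∈ univ \ {u, l}, A l w * C ((g * Equiv.swap u l) l) ((g * Equiv.swap u l) w)
      = ∑ w ∈ univ \ {u, l}, A l w * C (g u) (g w) := by
    apply Finset.sum_congr rfl
    intro w hw
    simp only [Equiv.Perm.mul_apply, hsw w hw, Equiv.swap_apply_right]
  have e3 : ∑ v ∈ univ \ {u, l}, ∑ w ∈ univ \ {u, l}, A v w * C ((g * Equiv.swap u l) v) ((g * Equiv.swap u l) w)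
      = ∑ v ∈ univ \ {u, l}, ∑ w ∈ univ \ {u, l}, A v w * C (g v) (g w) := by
    apply Finset.sum_congr rfl
    intro v hv
    apply Finset.sum_congr rfl
    intro w hw
    simp only [Equiv.Perm.mul_apply, hsw w hw, hsw v hv]
  rw [e1, e2, e3]
  simp only [Equiv.Perm.mul_apply, Equiv.swap_apply_left, Equiv.swap_apply_right]
  rw [hCs (g l) (g u)]
  have e4 : ∑ w ∈ univ \ {u, l}, (A u w - A l w) * (C (g u) (g w) - C (g l) (g w))
    = ∑ w ∈ univ \ {u, l}, A u w * C (g u) (g w) - ∑ w ∈ univ \ {u, l}, A u w * C (g l) (g w)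
     - ∑ w ∈ univ \ {u, l}, A l w * C (g u) (g w) + ∑ w ∈ univ \ {u, l}, A l w * C (g l) (g w) := by
    rw [← Finset.sum_sub_distrib, ← Finset.sum_sub_distrib, ← Finset.sum_add_distrib]
    apply Finset.sum_congr rfl
    intro w _
    ring
  rw [e4]
  ring

lemma pos_inv {α : Type*} [Fintype α] [DecidableEq α] (Q : Equiv.Perm α → Prop)
    (S : Finset α) (l : α) (hl : l ∉ S)
    (hS : ∀ r, r ∉ S → ∀ g, Q g ↔ Q (g * Equiv.swap r l)) (g g' : Equiv.Perm α)
    (hgg : ∀ v ∈ S, g v = g' v) : Q g ↔ Q g' := by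
  have hab : ∀ a b, a ∉ S → b ∉ S → ∀ g, Q g ↔ Q (g * Equiv.swap a b) := by
    intro a b ha hb g
    by_cases hab : a = b
    · subst hab; simp [← Equiv.Perm.one_def]
    by_cases hal : a = l
    · subst hal; rw [Equiv.swap_comm]; exact hS b hb g
    by_cases hbl : b = l
    · subst hbl; exact hS a ha g
    have : Equiv.swap a b = Equiv.swap a l * Equiv.swap b l * Equiv.swap a l := by
      rw [Equiv.swap_comm a l, Equiv.swap_comm b l]
      ext x
      simp only [Equiv.Perm.mul_apply, Equiv.swap_apply_def]
      grind
    rw [this, ← mul_assoc, ← mul_assoc, ← hS a ha, ← hS b hb, ← hS a ha]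
  have main : ∀ (π : Equiv.Perm {x // x ∉ S}) (g : Equiv.Perm α),
      Q g ↔ Q (g * Equiv.Perm.ofSubtype π) := by
    intro π
    induction π using Equiv.Perm.swap_induction_on with
    | one => intro g; simp
    | swap_mul f x y hxy ih =>
      intro g
      rw [map_mul, ← mul_assoc, ← ih, Equiv.Perm.ofSubtype_swap_eq, ← hab _ _ x.2 y.2]
  have h2 : ∀ x, (x ∉ S) ↔ ((g⁻¹ * g') x ∉ S) := by
    intro x
    by_cases hx : x ∈ S
    · have : (g⁻¹ * g') x = x := by simp [← hgg x hx]
      rw [this]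
    · simp only [hx, not_false_eq_true, true_iff]
      intro h3
      have h4 := hgg _ h3
      have h5 : g' x = g' ((g⁻¹ * g') x) := by rw [← h4]; simp
      rw [← g'.injective h5] at h3
      exact hx h3
  have := main ((g⁻¹ * g').subtypePerm (fun x => (h2 x).symm)) g
  rw [Equiv.Perm.ofSubtype_subtypePerm] at this
  · simpa using this
  · intro x hx hxS
    apply hx
    simp [← hgg x hxS]

lemma forest_sum {α : Type*} [Fintype α] [DecidableEq α] (F : SimpleGraph α) [DecidableRel F.Adj]
    (hF : F.IsAcyclic) (T : Finset α) (hT : T.Nonempty) :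
    ∑ v ∈ T, ∑ w ∈ T, (if F.Adj v w then (1 : ℤ) else 0) ≤ 2 * ((T.card : ℤ) - 1) := by
  classical
  have hG : (F.induce (T : Set α)).IsAcyclic := hF.induce _
  have : Nonempty (T : Set α) := hT.to_subtype
  obtain ⟨H, hle, -, hH⟩ : ∃ H : SimpleGraph (T : Set α), F.induce (T : Set α) ≤ H ∧ H ≤ ⊤ ∧ H.IsTree := by
    obtain ⟨H, h1, h2, h3⟩ := SimpleGraph.connected_top.exists_isTree_le_of_le_of_isAcyclic
      (le_top : F.induce (T : Set α) ≤ ⊤) hG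
    exact ⟨H, by tauto⟩
  have h1 := hH.card_edgeFinset
  have h2 : (F.induce (T : Set α)).edgeFinset.card ≤ H.edgeFinset.card :=
    Finset.card_le_card (SimpleGraph.edgeFinset_mono hle)
  have h3 := (F.induce (T : Set α)).sum_degrees_eq_twice_card_edges
  have h4 : ∑ v ∈ T, ∑ w ∈ T, (if F.Adj v w then (1 : ℤ) else 0)
      = ((∑ v, (F.induce (T : Set α)).degree v : ℕ) : ℤ) := by
    push_cast
    rw [← Finset.sum_coe_sort T]
    apply Finset.sum_congr rfl
    intro v _
    rw [← Finset.sum_coe_sort T, ← SimpleGraph.card_neighborFinset_eq_degree,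
      SimpleGraph.neighborFinset_eq_filter, Finset.card_filter]
    push_cast
    rfl
  have h5 : Fintype.card (T : Set α) = T.card := by simp
  rw [h4, h3]
  push_cast
  omega

lemma dart_sum {α : Type*} [Fintype α] [DecidableEq α] (G : SimpleGraph α) [DecidableRel G.Adj]
    (h : Sym2 α → ℤ) :
    ∑ v, ∑ w, (if G.Adj v w then h s(v, w) else 0) = 2 * ∑ e ∈ G.edgeFinset, h e := by
  rw [← Finset.sum_product', Finset.mul_sum, Finset.univ_product_univ,
    ← Finset.sum_filter (fun p : α × α => G.Adj p.1 p.2) (fun p => h s(p.1, p.2)),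
    ← Finset.sum_fiberwise_of_maps_to (t := G.edgeFinset) (g := fun p : α × α => s(p.1, p.2))]
  · apply Finset.sum_congr rfl
    intro e he
    rw [Finset.sum_congr rfl (g := fun _ => h e)]
    · rw [Finset.sum_const]
      induction e using Sym2.ind with
      | _ a b =>
      simp at he
      have : ({p ∈ ({p | G.Adj p.1 p.2} : Finset (α × α)) | s(p.1, p.2) = s(a, b)} : Finset (α × α))
          = {(a, b), (b, a)} := by
        ext ⟨p, q⟩
        simp
        rintro (⟨rfl, rfl⟩ | ⟨rfl, rfl⟩)
        · exact he
        · exact he.symm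
      rw [this, Finset.card_pair]
      · simp
      · intro hh
        simp at hh
        exact he.ne hh.1
    · intro p hp
      simp at hp
      rw [hp.2]
  · intro p hp
    simpa using hp

/-- star-type counting -/
lemma bip_bound {α : Type*} [DecidableEq α] (C : α → α → ℤ)
    (hC1 : ∀ v w, C v w ≤ 1) (hC2 : ∀ v w, -1 ≤ C v w) (hCs : ∀ v w, C v w = C w v)
    (P M : Finset α) (hPM : Disjoint P M) (hP : P.Nonempty) (hM : M.Nonempty) (L E : ℤ)
    (hL : ∀ z ∈ P, ∀ z' ∈ M, ∑ q ∈ P ∪ M, (2 - C z q + C z' q) ≤ L)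
    (hE : ∑ a ∈ P ∪ M, ∑ b ∈ P ∪ M, C a b ≤ E) (hmp : M.card ≤ P.card) :
    2 * (M.card : ℤ) ≤ L ∧
    (P.card : ℤ) * (P.card + M.card - L) ≤ M.card * (P.card + M.card) + E := by
  have hp : (0 : ℤ) < P.card := by exact_mod_cast hP.card_pos
  have hm : (0 : ℤ) < M.card := by exact_mod_cast hM.card_pos
  have hmp' : (M.card : ℤ) ≤ P.card := by exact_mod_cast hmp
  constructor
  · -- double count
    have h1 : ∑ z ∈ P, ∑ z' ∈ M, ∑ q ∈ P ∪ M, (2 - C z q + C z' q) ≤ ∑ z ∈ P, ∑ z' ∈ M, L :=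
      Finset.sum_le_sum fun z hz => Finset.sum_le_sum fun z' hz' => hL z hz z' hz'
    have h2 : ∀ z ∈ P, ∀ z' ∈ M, ∑ q ∈ M, (1 - C z q) + ∑ q ∈ P, (1 + C z' q)
        ≤ ∑ q ∈ P ∪ M, (2 - C z q + C z' q) := by
      intro z hz z' hz'
      rw [Finset.sum_union hPM, add_comm]
      apply add_le_add
      · apply Finset.sum_le_sum; intro q _; linarith [hC1 z q]
      · apply Finset.sum_le_sum; intro q _; linarith [hC2 z' q]
    have h3 : ∑ z ∈ P, ∑ z' ∈ M, (∑ q ∈ M, (1 - C z q) + ∑ q ∈ P, (1 + C z' q))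
      ≤ ∑ z ∈ P, ∑ z' ∈ M, ∑ q ∈ P ∪ M, (2 - C z q + C z' q) :=
      Finset.sum_le_sum fun z hz => Finset.sum_le_sum fun z' hz' => h2 z hz z' hz'
    have hc : ∑ z ∈ M, ∑ q ∈ P, C z q = ∑ z ∈ P, ∑ q ∈ M, C z q := by
      rw [Finset.sum_comm]
      exact Finset.sum_congr rfl fun z _ => Finset.sum_congr rfl fun q _ => hCs _ _
    have h4 : ∑ z ∈ P, ∑ z' ∈ M, (∑ q ∈ M, (1 - C z q) + ∑ q ∈ P, (1 + C z' q))
      = M.card * (P.card * M.card - ∑ z ∈ P, ∑ q ∈ M, C z q)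
        + P.card * (P.card * M.card + ∑ z ∈ P, ∑ q ∈ M, C z q) := by
      simp only [Finset.sum_add_distrib, Finset.sum_sub_distrib, Finset.sum_const, nsmul_eq_mul,
        ← Finset.mul_sum, mul_one, hc]
      ring
    have h5 : ∑ z ∈ P, ∑ q ∈ M, (-1 : ℤ) ≤ ∑ z ∈ P, ∑ q ∈ M, C z q :=
      Finset.sum_le_sum fun z _ => Finset.sum_le_sum fun q _ => hC2 z q
    simp only [Finset.sum_const, nsmul_eq_mul] at h1 h5
    set c := ∑ z ∈ P, ∑ q ∈ M, C z q
    set p : ℤ := (P.card : ℤ)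
    set m : ℤ := (M.card : ℤ)
    have h6 : 0 ≤ (p - m) * (p * m + c) := mul_nonneg (by linarith) (by linarith)
    have h7 : (p * m) * (2 * m) ≤ (p * m) * L := by nlinarith
    exact le_of_mul_le_mul_left h7 (by positivity)
  · obtain ⟨z', hz'⟩ := hM
    have hn : (((P ∪ M).card : ℕ) : ℤ) = P.card + M.card := by
      rw [Finset.card_union_of_disjoint hPM]; push_cast; ring
    have h1 : ∀ z, -((P.card : ℤ) + M.card) ≤ ∑ q ∈ P ∪ M, C z q := by
      intro z
      have : ∑ q ∈ P ∪ M, (-1 : ℤ) ≤ ∑ q ∈ P ∪ M, C z q := Finset.sum_le_sum fun q _ => hC2 z q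
      simp only [Finset.sum_const, nsmul_eq_mul, hn] at this
      linarith
    have h2 : ∀ z ∈ P, (P.card : ℤ) + M.card - L ≤ ∑ q ∈ P ∪ M, C z q := by
      intro z hz
      have h := hL z hz z' hz'
      simp only [Finset.sum_add_distrib, Finset.sum_sub_distrib, Finset.sum_const, nsmul_eq_mul, hn] at h
      linarith [h1 z']
    have h3 := Finset.sum_le_sum h2
    have h4 := Finset.sum_le_sum (s := M) (fun z _ => h1 z)
    rw [Finset.sum_union hPM] at hE
    simp only [Finset.sum_const, nsmul_eq_mul] at h3 h4
    linarith

lemma numeric (n s p m L : ℤ) (hs : 1 ≤ s) (hn : 34 * s ≤ n) (hpm : p + m = n - s + 1)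
    (hm : 0 ≤ m) (hmp : m ≤ p) (h1 : 2 * m ≤ L)
    (h2 : p * (p + m - L) ≤ m * (p + m) + 2 * (s - 1) * n) : n - 50 ≤ 2 * L := by
  by_contra hcon
  push Not at hcon
  obtain ⟨t, rfl⟩ : ∃ t, s = t + 1 := ⟨s - 1, by ring⟩
  obtain ⟨N, hN⟩ : ∃ N, N = n - t := ⟨_, rfl⟩
  have hp : p = N - m := by linarith
  subst hp
  rw [show N - m + m = N by ring] at h2
  have ht : 0 ≤ t := by linarith
  have a1 : 0 ≤ (L - 2 * m) * (N - L) := mul_nonneg (by linarith) (by linarith)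
  have a2 : 0 ≤ (L - 2 * m) * N := mul_nonneg (by linarith) (by linarith)
  have a3 : 2 * N ^ 2 - 4 * N * L + L ^ 2 ≤ 4 * t * n := by nlinarith
  have a4 : 0 ≤ (n - 51 - 2 * L) * (8 * N - (n - 51) - 2 * L) :=
    mul_nonneg (by linarith) (by linarith)
  subst hN
  have a5 : 0 ≤ (n - 34 * t - 34) * n := mul_nonneg (by linarith) (by linarith)
  have a6 : 0 ≤ t * n := mul_nonneg ht (by linarith)
  nlinarith

lemma exchange {α : Type*} [Fintype α] [DecidableEq α] (A C : α → α → ℤ)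
    (hA01 : ∀ v w, A v w = 0 ∨ A v w = 1)
    (hAs : ∀ v w, A v w = A w v) (hA0 : ∀ v, A v v = 0)
    (hC : ∀ v w, v ≠ w → C v w = 1 ∨ C v w = -1)
    (hCs : ∀ v w, C v w = C w v) (hC0 : ∀ v, C v v = 0)
    (S : Finset α) (u l : α) (hu : u ∈ S) (hl : l ∉ S) (f : Equiv.Perm α) (z z' : α)
    (g0 : Equiv.Perm α) (hg0 : ∀ v ∈ S.erase u, g0 v = f v) (hg0u : g0 u = z) (hg0l : g0 l = z')
    (Δ : ℤ) (hΔ : 0 ≤ Δ)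
    (hbig : ∀ g : Equiv.Perm α, (∀ v ∈ S.erase u, g v = f v) → g u = z → g l = z' →
      2 * Δ + 74 ≤ bval A C g - bval A C (g * Equiv.swap u l))
    (hAl : ∑ w, A l w ≤ 1) (hAS : ∑ w ∈ S, A u w ≤ 2) :
    ∑ q ∈ univ \ (S.erase u).image f, (2 - C z q + C z' q) ≤ 2 * (∑ w, A u w) - Δ - 27 := by
  classical
  have hul : u ≠ l := fun h => hl (h ▸ hu)
  have hAn : ∀ v w, 0 ≤ A v w := fun v w => by rcases hA01 v w with h | h <;> rw [h] <;> norm_num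
  have hC1 : ∀ v w, C v w ≤ 1 := fun v w => by
    by_cases h : v = w
    · rw [h, hC0]; norm_num
    · rcases hC v w h with h | h <;> rw [h]; norm_num
  have hC2 : ∀ v w, -1 ≤ C v w := fun v w => by
    by_cases h : v = w
    · rw [h, hC0]; norm_num
    · rcases hC v w h with h | h <;> rw [h]; norm_num
  set T : α → ℤ := fun q => 2 - C z q + C z' q with hT
  set R : Finset α := univ \ insert l S with hR
  let GG : Finset (Equiv.Perm α) :=
    univ.filter fun g => (∀ v ∈ S.erase u, g v = f v) ∧ g u = z ∧ g l = z'
  have hGG : GG.Nonempty := ⟨g0, by simp only [GG, mem_filter, mem_univ, true_and]; exact ⟨hg0, hg0u, hg0l⟩⟩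
  obtain ⟨g, hgm, hgmax⟩ := Finset.exists_max_image GG (fun g => ∑ w ∈ R, A u w * T (g w)) hGG
  simp only [GG, mem_filter, mem_univ, true_and] at hgm
  obtain ⟨hg1, hg2, hg3⟩ := hgm
  have hexch : ∀ w ∈ R, ∀ r ∈ R, A u w = 1 → A u r = 0 → T (g r) ≤ T (g w) := by
    intro w hw r hr haw har
    simp only [hR, mem_sdiff, mem_univ, true_and, mem_insert, not_or] at hw hr
    have hwr : w ≠ r := by rintro rfl; omega
    have hfix : ∀ v, v ≠ w → v ≠ r → (g * Equiv.swap w r) v = g v := by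
      intro v h1 h2
      simp [Equiv.swap_apply_of_ne_of_ne h1 h2]
    have hm : g * Equiv.swap w r ∈ GG := by
      simp only [GG, mem_filter, mem_univ, true_and]
      refine ⟨?_, ?_, ?_⟩
      · intro v hv
        have hvS := Finset.mem_of_mem_erase hv
        rw [hfix v (by rintro rfl; exact hw.2 hvS) (by rintro rfl; exact hr.2 hvS)]
        exact hg1 v hv
      · rw [hfix u (by rintro rfl; exact hw.2 hu) (by rintro rfl; exact hr.2 hu)]
        exact hg2
      · rw [hfix l (fun h => hw.1 h.symm) (fun h => hr.1 h.symm)]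
        exact hg3
    have h := hgmax _ hm
    have hsub : ({w, r} : Finset α) ⊆ R := by
      intro x hx
      simp only [mem_insert, mem_singleton] at hx
      rcases hx with rfl | rfl <;> simp [hR, hw, hr]
    simp only [← Finset.sum_sdiff hsub, Finset.sum_pair hwr] at h
    have h2 : ∑ x ∈ R \ {w, r}, A u x * T ((g * Equiv.swap w r) x) = ∑ x ∈ R \ {w, r}, A u x * T (g x) := by
      apply Finset.sum_congr rfl
      intro x hx
      simp only [mem_sdiff, mem_insert, mem_singleton, not_or] at hx
      rw [hfix x hx.2.1 hx.2.2]
    rw [h2, haw, har] at h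
    simp at h
    exact h
  have hTg : ∀ r ∈ R, 0 ≤ T (g r) ∧ (T (g r) ≠ 0 → 2 ≤ T (g r)) := by
    intro r hr
    simp only [hR, mem_sdiff, mem_univ, true_and, mem_insert, not_or] at hr
    have h1 : z ≠ g r := by
      rw [← hg2]; intro h; exact hr.2 (g.injective h ▸ hu)
    have h2 : z' ≠ g r := by
      rw [← hg3]; intro h; exact hr.1 (g.injective h).symm
    simp only [hT]
    rcases hC _ _ h1 with h | h <;> rcases hC _ _ h2 with h' | h' <;> rw [h, h'] <;> norm_num
  have hdiff := hbig g hg1 hg2 hg3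
  rw [swap_diff A C hAs hA0 hCs hC0 u l hul g] at hdiff
  have hsplit : univ \ ({u, l} : Finset α) = R ∪ S.erase u := by
    ext x
    simp only [hR, mem_sdiff, mem_univ, true_and, mem_insert, mem_singleton, mem_union, mem_erase]
    constructor
    · intro h; by_cases hx : x ∈ S <;> tauto
    · rintro (h | h) h'
      · rcases h' with rfl | rfl <;> tauto
      · rcases h' with rfl | rfl <;> tauto
  have hdisj : Disjoint R (S.erase u) := by
    rw [Finset.disjoint_left]
    intro x hx hx'
    simp only [hR, mem_sdiff, mem_univ, true_and, mem_insert, not_or] at hx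
    exact hx.2 (Finset.mem_of_mem_erase hx')
  have b1 : ∑ w ∈ univ \ {u, l}, (A u w - A l w) * (C (g u) (g w) - C (g l) (g w))
      ≤ ∑ w ∈ univ \ {u, l}, A u w * (C (g u) (g w) - C (g l) (g w)) + 2 := by
    have : ∑ w ∈ univ \ {u, l}, (A u w - A l w) * (C (g u) (g w) - C (g l) (g w))
      ≤ ∑ w ∈ univ \ {u, l}, (A u w * (C (g u) (g w) - C (g l) (g w)) + 2 * A l w) := by
      apply Finset.sum_le_sum
      intro w _
      have := hAn l w
      have := hC1 (g l) (g w)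
      have := hC2 (g u) (g w)
      nlinarith
    have h2 : ∑ w ∈ univ \ {u, l}, A l w ≤ ∑ w, A l w :=
      Finset.sum_le_sum_of_subset_of_nonneg (Finset.subset_univ _) (fun w _ _ => hAn l w)
    rw [Finset.sum_add_distrib, ← Finset.mul_sum] at this
    linarith
  have b2 : ∑ w ∈ S.erase u, A u w * (C (g u) (g w) - C (g l) (g w)) ≤ 4 := by
    have : ∑ w ∈ S.erase u, A u w * (C (g u) (g w) - C (g l) (g w)) ≤ ∑ w ∈ S.erase u, 2 * A u w := by
      apply Finset.sum_le_sum
      intro w _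
      have := hAn u w
      have := hC2 (g l) (g w)
      have := hC1 (g u) (g w)
      nlinarith
    have h2 : ∑ w ∈ S.erase u, A u w ≤ ∑ w ∈ S, A u w :=
      Finset.sum_le_sum_of_subset_of_nonneg (Finset.erase_subset _ _) (fun w _ _ => hAn u w)
    rw [← Finset.mul_sum] at this
    linarith
  simp only [hsplit, Finset.sum_union hdisj] at b1 hdiff
  have b3 : ∑ w ∈ R, A u w * T (g w) = 2 * ∑ w ∈ R, A u w
      - ∑ w ∈ R, A u w * (C (g u) (g w) - C (g l) (g w)) := by
    rw [Finset.mul_sum, ← Finset.sum_sub_distrib]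
    apply Finset.sum_congr rfl
    intro w _
    simp only [hT, hg2, hg3]
    ring
  have b4 : ∑ w ∈ R, A u w ≤ ∑ w, A u w :=
    Finset.sum_le_sum_of_subset_of_nonneg (Finset.subset_univ _) (fun w _ _ => hAn u w)
  have b5 : ∑ w ∈ R, A u w * T (g w) ≤ 2 * ∑ w ∈ R, A u w - Δ - 31 := by linarith
  have b6 : ∀ r ∈ R, A u r = 0 → T (g r) = 0 := by
    intro r hr har
    by_contra hne
    have h2 := (hTg r hr).2 hne
    have : ∑ w ∈ R, 2 * A u w ≤ ∑ w ∈ R, A u w * T (g w) := by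
      apply Finset.sum_le_sum
      intro w hw
      rcases hA01 u w with h | h
      · rw [h]; simp
      · have := hexch w hw r hr h har
        rw [h]; linarith
    rw [← Finset.mul_sum] at this
    linarith
  have b7 : ∑ r ∈ R, T (g r) = ∑ w ∈ R, A u w * T (g w) := by
    apply Finset.sum_congr rfl
    intro r hr
    rcases hA01 u r with h | h
    · rw [b6 r hr h]; simp
    · rw [h]; simp
  have hset : univ \ (S.erase u).image f = (insert u (insert l R)).image g := by
    rw [Finset.image_congr (s := S.erase u) (f := f) (g := g) (fun v hv => (hg1 v hv).symm)]
    ext q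
    obtain ⟨v, rfl⟩ := g.surjective q
    simp only [hR, mem_sdiff, mem_univ, true_and, mem_image, EmbeddingLike.apply_eq_iff_eq,
      exists_eq_right, mem_insert, mem_erase]
    by_cases h1 : v = u <;> by_cases h2 : v = l <;> simp [h1, h2, hl]
  rw [hset, Finset.sum_image (fun a _ b _ h => g.injective h), Finset.sum_insert, Finset.sum_insert]
  · change T (g u) + (T (g l) + ∑ r ∈ R, T (g r)) ≤ _
    rw [b7]
    have : T (g u) + T (g l) = 4 := by
      simp only [hT, hg2, hg3, hC0, hCs z' z]; ring
    linarith
  · simp [hR]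
  · simp [hR, hul, hu]

lemma E_bound {α : Type*} [Fintype α] [DecidableEq α] (C : α → α → ℤ)
    (hC1 : ∀ v w, C v w ≤ 1) (hbal : ∑ v, ∑ w, C v w = 0) (X : Finset α) :
    -(2 * (X.card : ℤ) * Fintype.card α) ≤ ∑ v ∈ univ \ X, ∑ w ∈ univ \ X, C v w := by
  have h1 : ∑ v, ∑ w, C v w = ∑ v ∈ univ \ X, ∑ w ∈ univ \ X, C v w
      + ∑ v ∈ univ \ X, ∑ w ∈ X, C v w + ∑ v ∈ X, ∑ w, C v w := by
    rw [← Finset.sum_sdiff (Finset.subset_univ X), ← Finset.sum_add_distrib]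
    congr 1
    apply Finset.sum_congr rfl
    intro v _
    rw [Finset.sum_sdiff (Finset.subset_univ X)]
  have h2 : ∑ v ∈ univ \ X, ∑ w ∈ X, C v w ≤ ∑ v ∈ univ \ X, ∑ w ∈ X, (1 : ℤ) :=
    Finset.sum_le_sum fun z _ => Finset.sum_le_sum fun q _ => hC1 z q
  have h3 : ∑ v ∈ X, ∑ w, C v w ≤ ∑ v ∈ X, ∑ w : α, (1 : ℤ) :=
    Finset.sum_le_sum fun z _ => Finset.sum_le_sum fun q _ => hC1 z q
  simp only [Finset.sum_const, nsmul_eq_mul, mul_one, Finset.card_univ] at h2 h3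
  have h4 : (((univ \ X).card : ℕ) : ℤ) ≤ Fintype.card α := by
    exact_mod_cast Finset.card_le_univ _
  have h5 : (0 : ℤ) ≤ X.card := by positivity
  have h6 := mul_le_mul_of_nonneg_right h4 h5
  linarith

lemma sens_deg {α : Type*} [Fintype α] [DecidableEq α] (A C : α → α → ℤ)
    (hA01 : ∀ v w, A v w = 0 ∨ A v w = 1)
    (hAs : ∀ v w, A v w = A w v) (hA0 : ∀ v, A v v = 0)
    (hC : ∀ v w, v ≠ w → C v w = 1 ∨ C v w = -1)
    (hCs : ∀ v w, C v w = C w v) (hC0 : ∀ v, C v v = 0) (hbal : ∑ v, ∑ w, C v w = 0)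
    (S : Finset α) (u l : α) (hu : u ∈ S) (hl : l ∉ S) (f : Equiv.Perm α)
    (Δ : ℤ) (hΔ : 0 ≤ Δ)
    (hbig : ∀ g : Equiv.Perm α, Δ + 37 ≤ bval A C g ∨ bval A C g ≤ -(Δ + 37))
    (hS : ∀ r, r ∉ S → ∀ g, 0 < bval A C g ↔ 0 < bval A C (g * Equiv.swap r l))
    (hf1 : 0 < bval A C f) (hf2 : ¬ 0 < bval A C (f * Equiv.swap u l))
    (hAl : ∑ w, A l w ≤ 1) (hAS : ∑ w ∈ S, A u w ≤ 2)
    (hd : ∑ w, A u w ≤ Δ) (hcard : 34 * (S.card : ℤ) ≤ Fintype.card α) :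
    (Fintype.card α : ℤ) + 4 ≤ 2 * ∑ w, A u w := by
  classical
  have hul : u ≠ l := fun h => hl (h ▸ hu)
  have hC1 : ∀ v w, C v w ≤ 1 := fun v w => by
    by_cases h : v = w
    · rw [h, hC0]; norm_num
    · rcases hC v w h with h | h <;> rw [h]; norm_num
  have hC2 : ∀ v w, -1 ≤ C v w := fun v w => by
    by_cases h : v = w
    · rw [h, hC0]; norm_num
    · rcases hC v w h with h | h <;> rw [h]; norm_num
  have hinv := pos_inv (fun g => 0 < bval A C g) S l hl hS
  set X := (S.erase u).image f with hX
  have hXc : (X.card : ℤ) = S.card - 1 := by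
    rw [hX, Finset.card_image_of_injective _ f.injective, Finset.card_erase_of_mem hu]
    have := Finset.card_pos.mpr ⟨u, hu⟩
    omega
  set V' := univ \ X with hV'
  set P := V'.filter (fun z => ∃ g : Equiv.Perm α, (∀ v ∈ S.erase u, g v = f v) ∧ g u = z ∧ 0 < bval A C g) with hP
  set M := V'.filter (fun z => ¬ ∃ g : Equiv.Perm α, (∀ v ∈ S.erase u, g v = f v) ∧ g u = z ∧ 0 < bval A C g) with hM
  have hPM : P ∪ M = V' := Finset.filter_union_filter_not_eq _ _
  have hdis : Disjoint P M := Finset.disjoint_filter_filter_not _ _ _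
  have hmemV : ∀ v, v ∉ S.erase u → f v ∈ V' := by
    intro v hv
    simp only [hV', hX, mem_sdiff, mem_univ, true_and, mem_image, not_exists, not_and]
    intro w hw h
    exact hv (f.injective h ▸ hw)
  have hagree : ∀ g g' : Equiv.Perm α, (∀ v ∈ S.erase u, g v = f v) → (∀ v ∈ S.erase u, g' v = f v) →
      g u = g' u → (0 < bval A C g ↔ 0 < bval A C g') := by
    intro g g' h1 h2 h3
    apply hinv
    intro v hv
    by_cases hvu : v = u
    · rw [hvu, h3]
    · rw [h1 v (Finset.mem_erase.mpr ⟨hvu, hv⟩), h2 v (Finset.mem_erase.mpr ⟨hvu, hv⟩)]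
  have hswapagree : ∀ g : Equiv.Perm α, (∀ v ∈ S.erase u, g v = f v) →
      ∀ v ∈ S.erase u, (g * Equiv.swap u l) v = f v := by
    intro g hg v hv
    rw [Equiv.Perm.mul_apply, Equiv.swap_apply_of_ne_of_ne, hg v hv]
    · exact (Finset.mem_erase.mp hv).1
    · rintro rfl; exact hl (Finset.mem_of_mem_erase hv)
  have hPne : P.Nonempty := by
    refine ⟨f u, ?_⟩
    rw [hP, mem_filter]
    exact ⟨hmemV u (by simp), f, fun _ _ => rfl, rfl, hf1⟩
  have hMne : M.Nonempty := by
    refine ⟨f l, ?_⟩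
    rw [hM, mem_filter]
    refine ⟨hmemV l (fun h => hl (Finset.mem_of_mem_erase h)), ?_⟩
    rintro ⟨g, hg1, hg2, hg3⟩
    apply hf2
    rw [← hagree g _ hg1 (hswapagree f (fun _ _ => rfl)) (by simp [hg2])]
    exact hg3
  have hL : ∀ z ∈ P, ∀ z' ∈ M, ∑ q ∈ V', (2 - C z q + C z' q) ≤ 2 * (∑ w, A u w) - Δ - 27 := by
    intro z hz z' hz'
    have hzz : z ≠ z' := fun h => (Finset.disjoint_left.mp hdis hz) (h ▸ hz')
    rw [hP, mem_filter] at hz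
    rw [hM, mem_filter] at hz'
    obtain ⟨hzV, g1, h1, h2, h3⟩ := hz
    obtain ⟨hzV', hno⟩ := hz'
    have hz'X : ∀ v ∈ S.erase u, f v ≠ z' := by
      intro v hv h
      simp only [hV', mem_sdiff, mem_univ, true_and] at hzV'
      exact hzV' (by rw [← h, hX]; exact Finset.mem_image_of_mem _ hv)
    refine exchange A C hA01 hAs hA0 hC hCs hC0 S u l hu hl f z z' (Equiv.swap (g1 l) z' * g1)
      ?_ ?_ ?_ Δ hΔ ?_ hAl hAS
    · intro v hv
      rw [Equiv.Perm.mul_apply, Equiv.swap_apply_of_ne_of_ne, h1 v hv]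
      · intro h
        have := g1.injective h
        subst this
        exact hl (Finset.mem_of_mem_erase hv)
      · rw [h1 v hv]; exact hz'X v hv
    · rw [Equiv.Perm.mul_apply, Equiv.swap_apply_of_ne_of_ne, h2]
      · intro h; exact hul (g1.injective h)
      · rw [h2]; exact hzz
    · simp
    · intro g hg1 hg2 hg3
      have hp : 0 < bval A C g := (hagree g g1 hg1 h1 (by rw [hg2, h2])).mpr h3
      have hn : ¬ 0 < bval A C (g * Equiv.swap u l) := by
        intro h
        exact hno ⟨_, hswapagree g hg1, by simp [hg3], h⟩
      rcases hbig g with a | a <;> rcases hbig (g * Equiv.swap u l) with b | b <;> linarith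
  have hcV : (P.card : ℤ) + M.card = Fintype.card α - S.card + 1 := by
    have h1 := Finset.card_union_of_disjoint hdis
    rw [hPM, hV', Finset.card_sdiff_of_subset (Finset.subset_univ X), Finset.card_univ] at h1
    have h2 := Finset.card_le_univ X
    omega
  have hs1 : (1 : ℤ) ≤ S.card := by exact_mod_cast Finset.card_pos.mpr ⟨u, hu⟩
  have hm0 : (0 : ℤ) ≤ M.card := by positivity
  have hp0 : (0 : ℤ) ≤ P.card := by positivity
  have fin : (Fintype.card α : ℤ) - 50 ≤ 2 * (2 * (∑ w, A u w) - Δ - 27) := by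
    rcases le_total M.card P.card with hmp | hmp
    · have hE := E_bound (fun v w => - C v w) (fun v w => by linarith [hC2 v w]) (by simp [hbal]) X
      simp only [Finset.sum_neg_distrib] at hE
      obtain ⟨k1, k2⟩ := bip_bound C hC1 hC2 hCs P M hdis hPne hMne (2 * (∑ w, A u w) - Δ - 27)
        (2 * (S.card - 1) * Fintype.card α) (by rw [hPM]; exact hL)
        (by rw [hPM, ← hXc]; linarith) hmp
      exact numeric _ S.card P.card M.card _ hs1 hcard hcV hm0 (by exact_mod_cast hmp) k1 k2
    · have hE := E_bound C hC1 hbal X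
      obtain ⟨k1, k2⟩ := bip_bound (fun v w => - C v w) (fun v w => by linarith [hC2 v w])
        (fun v w => by linarith [hC1 v w]) (fun v w => by rw [hCs]) M P hdis.symm hMne hPne
        (2 * (∑ w, A u w) - Δ - 27)
        (2 * (S.card - 1) * Fintype.card α)
        (by
          rw [Finset.union_comm, hPM]
          intro z hz z' hz'
          have := hL z' hz' z hz
          refine le_trans (le_of_eq ?_) this
          apply Finset.sum_congr rfl
          intro q _
          ring)
        (by rw [Finset.union_comm, hPM, ← hXc]; simp only [Finset.sum_neg_distrib]; linarith) hmp
      exact numeric _ S.card M.card P.card _ hs1 hcard (by linarith) hp0 (by exact_mod_cast hmp) k1 k2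
  linarith

lemma sym_avg {α : Type*} [Fintype α] [DecidableEq α] (W : Finset (Equiv.Perm α)) (K : Finset α)
    (ψ : Equiv.Perm α → α → ℤ)
    (hW : ∀ g ∈ W, ∀ a ∈ K, ∀ b ∈ K, g * Equiv.swap a b ∈ W)
    (hψ : ∀ g ∈ W, ∀ a ∈ K, ∀ b ∈ K, ψ (g * Equiv.swap a b) a = ψ g b) (v : α) (hv : v ∈ K) :
    (K.card : ℤ) * ∑ g ∈ W, ψ g v = ∑ g ∈ W, ∑ v' ∈ K, ψ g v' := by
  rw [Finset.sum_comm]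
  have : ∀ v' ∈ K, ∑ g ∈ W, ψ g v' = ∑ g ∈ W, ψ g v := by
    intro v' hv'
    refine Finset.sum_nbij' (fun g => g * Equiv.swap v v') (fun g => g * Equiv.swap v v')
      (fun g hg => hW g hg v hv v' hv') (fun g hg => hW g hg v hv v' hv') ?_ ?_ ?_
    · intro g _; simp [mul_assoc]
    · intro g _; simp [mul_assoc]
    · intro g hg; exact (hψ g hg v hv v' hv').symm
  rw [Finset.sum_congr rfl this, Finset.sum_const, nsmul_eq_mul]

lemma swap_pair_avg {α : Type*} [Fintype α] [DecidableEq α] (C : α → α → ℤ)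
    (hC0 : ∀ v, C v v = 0) (W : Finset (Equiv.Perm α)) (K : Finset α)
    (hW : ∀ g ∈ W, ∀ a ∈ K, ∀ b ∈ K, g * Equiv.swap a b ∈ W) (v w : α) (hv : v ∈ K) (hw : w ∈ K)
    (hvw : v ≠ w) :
    ((K.card : ℤ) - 1) * ∑ g ∈ W, C (g v) (g w) = ∑ g ∈ W, ∑ v' ∈ K, C (g v') (g w) := by
  have h := sym_avg W (K.erase w) (fun g v' => C (g v') (g w))
    (fun g hg a ha b hb => hW g hg a (Finset.mem_of_mem_erase ha) b (Finset.mem_of_mem_erase hb))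
    (fun g hg a ha b hb => by
      simp only [mem_erase] at ha hb
      simp [Equiv.swap_apply_of_ne_of_ne ha.1.symm hb.1.symm])
    v (Finset.mem_erase.mpr ⟨hvw, hv⟩)
  rw [Finset.card_erase_of_mem hw] at h
  have h1 : 1 ≤ K.card := Finset.card_pos.mpr ⟨w, hw⟩
  push_cast [h1] at h
  rw [h]
  apply Finset.sum_congr rfl
  intro g _
  rw [← Finset.add_sum_erase K _ hw, hC0, zero_add]

lemma global_avg {α : Type*} [Fintype α] [DecidableEq α] (A C : α → α → ℤ)
    (hA0 : ∀ v, A v v = 0) (hC0 : ∀ v, C v v = 0)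
    (hbal : ∑ v, ∑ w, C v w = 0)
    (hn : 3 ≤ Fintype.card α) : ∑ g : Equiv.Perm α, bval A C g = 0 := by
  unfold bval
  rw [Finset.sum_comm]
  apply Finset.sum_eq_zero
  intro v _
  rw [Finset.sum_comm]
  apply Finset.sum_eq_zero
  intro w _
  rw [← Finset.mul_sum]
  by_cases hvw : v = w
  · rw [hvw, hA0, zero_mul]
  have h1 := swap_pair_avg C hC0 univ univ (by simp) v w (by simp) (by simp) hvw
  have h2 := sym_avg (univ : Finset (Equiv.Perm α)) univ (fun g w => ∑ v', C v' (g w)) (by simp)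
    (by simp) w (by simp)
  have h3 : ∀ g : Equiv.Perm α, ∑ v', C (g v') (g w) = ∑ v', C v' (g w) := fun g =>
    Equiv.sum_comp g (fun q => C q (g w))
  have h4 : ∀ g : Equiv.Perm α, ∑ w, ∑ v', C v' (g w) = 0 := fun g => by
    rw [Equiv.sum_comp g (fun q => ∑ v', C v' q), Finset.sum_comm]; exact hbal
  simp only [h3] at h1
  simp only [h4, Finset.sum_const_zero] at h2
  rw [← h1, Finset.card_univ] at h2
  have : ∑ g : Equiv.Perm α, C (g v) (g w) = 0 := by
    have hn' : (3 : ℤ) ≤ Fintype.card α := by exact_mod_cast hn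
    rcases mul_eq_zero.mp h2 with h | h
    · linarith
    · rcases mul_eq_zero.mp h with h | h
      · linarith
      · exact h
  rw [this, mul_zero]

lemma cond_avg {α : Type*} [Fintype α] [DecidableEq α] (A C : α → α → ℤ)
    (hAs : ∀ v w, A v w = A w v) (hA0 : ∀ v, A v v = 0) (hC0 : ∀ v, C v v = 0)
    (hCs : ∀ v w, C v w = C w v) (hbal : ∑ v, ∑ w, C v w = 0) (u x : α) :
    ((Fintype.card α : ℤ) - 1) * (Fintype.card α - 2) *
      ∑ g ∈ (univ.filter fun g : Equiv.Perm α => g u = x), bval A C g =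
    ((univ.filter fun g : Equiv.Perm α => g u = x).card : ℤ) * (∑ w, C x w) *
      (2 * (∑ w, A u w) * (Fintype.card α - 2)
        - 2 * ∑ v ∈ univ.erase u, ∑ w ∈ univ.erase u, A v w) := by
  set W := univ.filter fun g : Equiv.Perm α => g u = x with hW
  set K := univ.erase u with hK
  have hKc : (K.card : ℤ) = Fintype.card α - 1 := by
    rw [hK, Finset.card_erase_of_mem (mem_univ u), Finset.card_univ]
    have : 0 < Fintype.card α := Fintype.card_pos_iff.mpr ⟨u⟩
    omega
  have hWm : ∀ g ∈ W, ∀ a ∈ K, ∀ b ∈ K, g * Equiv.swap a b ∈ W := by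
    intro g hg a ha b hb
    simp only [hW, hK, mem_filter, mem_univ, true_and, mem_erase, and_true] at *
    rw [Equiv.Perm.mul_apply, Equiv.swap_apply_of_ne_of_ne (Ne.symm ha) (Ne.symm hb), hg]
  have hsum : ∀ g ∈ W, ∀ φ : α → ℤ, ∑ w ∈ K, φ (g w) = ∑ q, φ q - φ x := by
    intro g hg φ
    simp only [hW, mem_filter, mem_univ, true_and] at hg
    rw [← Equiv.sum_comp g φ, ← Finset.add_sum_erase univ (fun i => φ (g i)) (mem_univ u), hg]
    ring
  have hsplit : ∀ φ : α → ℤ, ∑ w, φ w = φ u + ∑ w ∈ K, φ w := fun φ =>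
    (Finset.add_sum_erase univ φ (mem_univ u)).symm
  have hav : ∀ φ : α → ℤ, ∀ w ∈ K, ((Fintype.card α : ℤ) - 1) * ∑ g ∈ W, φ (g w)
      = W.card * (∑ q, φ q - φ x) := by
    intro φ w hw
    have := sym_avg W K (fun g w => φ (g w)) hWm (by simp) w hw
    rw [← hKc, this, Finset.sum_congr rfl (fun g hg => hsum g hg φ), Finset.sum_const, nsmul_eq_mul]
  have ha : ∀ w ∈ K, ((Fintype.card α : ℤ) - 1) * ∑ g ∈ W, C x (g w) = W.card * ∑ w, C x w := by
    intro w hw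
    rw [hav (fun q => C x q) w hw, hC0]
    ring
  have hb : ∀ v ∈ K, ∀ w ∈ K, v ≠ w → ((Fintype.card α : ℤ) - 1) * (Fintype.card α - 2) *
      ∑ g ∈ W, C (g v) (g w) = - 2 * W.card * ∑ w, C x w := by
    intro v hv w hw hvw
    have h1 := swap_pair_avg C hC0 W K hWm v w hv hw hvw
    rw [Finset.sum_congr rfl (fun g hg => hsum g hg (fun q => C q (g w))), hKc] at h1
    have h2 := hav (fun q => ∑ p, C p q - C x q) w hw
    have h3 : ∑ q, (∑ p, C p q - C x q) = - ∑ q, C x q := by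
      rw [Finset.sum_sub_distrib, Finset.sum_comm, hbal]; ring
    have h4 : ∑ p, C p x = ∑ q, C x q := Finset.sum_congr rfl fun p _ => hCs p x
    rw [← h1, h3, h4, hC0] at h2
    linear_combination h2
  have hval : ∀ g ∈ W, bval A C g = 2 * ∑ w ∈ K, A u w * C x (g w)
      + ∑ v ∈ K, ∑ w ∈ K, A v w * C (g v) (g w) := by
    intro g hg
    simp only [hW, mem_filter, mem_univ, true_and] at hg
    unfold bval
    simp only [hsplit, hA0, hg, Finset.sum_add_distrib]
    rw [Finset.sum_congr rfl (fun w _ => by rw [hAs w u, hCs (g w) x] :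
      ∀ w ∈ K, A w u * C (g w) x = A u w * C x (g w))]
    ring
  rw [Finset.sum_congr rfl hval, Finset.sum_add_distrib, ← Finset.mul_sum, Finset.sum_comm,
    Finset.sum_comm (s := W) (t := K)]
  have t1 : ((Fintype.card α : ℤ) - 1) * ∑ w ∈ K, ∑ g ∈ W, A u w * C x (g w)
      = (∑ w ∈ K, A u w) * (W.card * ∑ w, C x w) := by
    rw [Finset.mul_sum, Finset.sum_mul]
    apply Finset.sum_congr rfl
    intro w hw
    rw [← Finset.mul_sum, ← ha w hw]
    ring
  have t2 : ((Fintype.card α : ℤ) - 1) * (Fintype.card α - 2) *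
      ∑ v ∈ K, ∑ g ∈ W, ∑ w ∈ K, A v w * C (g v) (g w)
      = (∑ v ∈ K, ∑ w ∈ K, A v w) * (- 2 * W.card * ∑ w, C x w) := by
    rw [Finset.mul_sum, Finset.sum_mul]
    apply Finset.sum_congr rfl
    intro v hv
    rw [Finset.sum_comm, Finset.mul_sum, Finset.sum_mul]
    apply Finset.sum_congr rfl
    intro w hw
    rw [← Finset.mul_sum]
    by_cases hvw : v = w
    · rw [hvw, hA0]; ring
    · rw [← hb v hv w hw hvw]; ring
  have t3 : ∑ w, A u w = ∑ w ∈ K, A u w := by rw [hsplit, hA0, zero_add]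
  rw [t3]
  linear_combination 2 * ((Fintype.card α : ℤ) - 2) * t1 + t2

lemma star_final {α : Type*} [Fintype α] [DecidableEq α] [Nonempty α] (C : α → α → ℤ)
    (hC1 : ∀ v w, C v w ≤ 1) (hC2 : ∀ v w, -1 ≤ C v w) (hC0 : ∀ v, C v v = 0)
    (hCs : ∀ v w, C v w = C w v) (hbal : ∑ v, ∑ w, C v w = 0)
    (h : ∀ x, (Fintype.card α : ℤ) ≤ 2 * ∑ w, C x w ∨ 2 * ∑ w, C x w ≤ - (Fintype.card α : ℤ)) :
    False := by
  set n : ℤ := (Fintype.card α : ℤ) with hn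
  have hn0 : 0 < n := by rw [hn]; exact_mod_cast Fintype.card_pos
  set P := univ.filter (fun x => n ≤ 2 * ∑ w, C x w) with hP
  set M := univ.filter (fun x => ¬ n ≤ 2 * ∑ w, C x w) with hM
  have hdis : Disjoint P M := Finset.disjoint_filter_filter_not _ _ _
  have hPM : P ∪ M = univ := Finset.filter_union_filter_not_eq _ _
  have hc : (P.card : ℤ) + M.card = n := by
    rw [hn, ← Finset.card_univ, ← hPM, Finset.card_union_of_disjoint hdis]; push_cast; ring
  have hs : ∀ φ : α → ℤ, ∑ w, φ w = ∑ w ∈ P, φ w + ∑ w ∈ M, φ w := fun φ => by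
    rw [← hPM, Finset.sum_union hdis]
  have hcr : ∑ z ∈ M, ∑ q ∈ P, C z q = ∑ z ∈ P, ∑ q ∈ M, C z q := by
    rw [Finset.sum_comm]
    exact Finset.sum_congr rfl fun z _ => Finset.sum_congr rfl fun q _ => hCs _ _
  have h1 : ∑ x ∈ P, n ≤ ∑ x ∈ P, 2 * ∑ w, C x w :=
    Finset.sum_le_sum fun x hx => by simpa [hP] using hx
  have h2 : ∑ x ∈ M, 2 * ∑ w, C x w ≤ ∑ x ∈ M, -n :=
    Finset.sum_le_sum fun x hx => by
      rw [hM, mem_filter] at hx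
      exact (h x).resolve_left hx.2
  have h3 : ∑ v ∈ P, ∑ w ∈ P, C v w ≤ P.card * (P.card - 1) := by
    rw [← nsmul_eq_mul]
    apply Finset.sum_le_card_nsmul
    intro v hv
    rw [← Finset.add_sum_erase P _ hv, hC0, zero_add]
    have := Finset.sum_le_card_nsmul (P.erase v) (fun w => C v w) 1 (fun w _ => hC1 v w)
    rw [Finset.card_erase_of_mem hv] at this
    have h0 : 1 ≤ P.card := Finset.card_pos.mpr ⟨v, hv⟩
    simpa [h0] using this
  have h4 : ∑ v ∈ M, ∑ w ∈ M, - C v w ≤ M.card * (M.card - 1) := by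
    rw [← nsmul_eq_mul]
    apply Finset.sum_le_card_nsmul
    intro v hv
    rw [← Finset.add_sum_erase M _ hv, hC0, neg_zero, zero_add]
    have := Finset.sum_le_card_nsmul (M.erase v) (fun w => - C v w) 1 (fun w _ => by linarith [hC2 v w])
    rw [Finset.card_erase_of_mem hv] at this
    have h0 : 1 ≤ M.card := Finset.card_pos.mpr ⟨v, hv⟩
    simpa [h0] using this
  rw [← Finset.mul_sum] at h1 h2
  simp only [Finset.sum_neg_distrib] at h4
  simp only [hs, Finset.sum_add_distrib, hcr] at h1 h2 hbal
  simp only [Finset.sum_const, nsmul_eq_mul] at h1 h2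
  have hp0 : (0 : ℤ) ≤ P.card := Int.natCast_nonneg _
  have hm0 : (0 : ℤ) ≤ M.card := Int.natCast_nonneg _
  generalize (P.card : ℤ) = p at *
  generalize (M.card : ℤ) = m at *
  rcases le_total p m with hpm | hpm
  · nlinarith
  · nlinarith

lemma forest_touch {α : Type*} [Fintype α] [DecidableEq α] [Nonempty α] (A : α → α → ℤ)
    (hAn : ∀ v w, 0 ≤ A v w) (hAs : ∀ v w, A v w = A w v)
    (hfor : ∀ T : Finset α, T.Nonempty → ∑ v ∈ T, ∑ w ∈ T, A v w ≤ 2 * ((T.card : ℤ) - 1))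
    (S : Finset α) (hS : S.Nonempty) :
    ∑ v ∈ S, ∑ w, A v w ≤ (Fintype.card α : ℤ) + S.card - 2 := by
  have h1 := hfor S hS
  have h2 := hfor univ Finset.univ_nonempty
  have hs : ∀ φ : α → ℤ, ∑ w, φ w = ∑ w ∈ univ \ S, φ w + ∑ w ∈ S, φ w := fun φ =>
    (Finset.sum_sdiff (Finset.subset_univ S)).symm
  have hcr : ∑ z ∈ univ \ S, ∑ q ∈ S, A z q = ∑ z ∈ S, ∑ q ∈ univ \ S, A z q := by
    rw [Finset.sum_comm]
    exact Finset.sum_congr rfl fun z _ => Finset.sum_congr rfl fun q _ => hAs _ _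
  have h3 : 0 ≤ ∑ v ∈ univ \ S, ∑ w ∈ univ \ S, A v w :=
    Finset.sum_nonneg fun v _ => Finset.sum_nonneg fun w _ => hAn v w
  have e1 : ∑ v, ∑ w, A v w = ∑ v ∈ univ \ S, ∑ w ∈ univ \ S, A v w
      + 2 * ∑ z ∈ S, ∑ q ∈ univ \ S, A z q + ∑ z ∈ S, ∑ q ∈ S, A z q := by
    rw [hs]
    simp only [hs (fun w => A _ w), Finset.sum_add_distrib]
    rw [hcr]; ring
  have e2 : ∑ v ∈ S, ∑ w, A v w = ∑ z ∈ S, ∑ q ∈ univ \ S, A z q + ∑ z ∈ S, ∑ q ∈ S, A z q := by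
    simp only [hs (fun w => A _ w), Finset.sum_add_distrib]
  rw [Finset.card_univ] at h2
  linarith

lemma low_exists {α : Type*} [Fintype α] [DecidableEq α] (A : α → α → ℤ)
    (hfor : ∀ T : Finset α, T.Nonempty → ∑ v ∈ T, ∑ w ∈ T, A v w ≤ 2 * ((T.card : ℤ) - 1))
    (S : Finset α) (hS : S.Nonempty) : ∃ u ∈ S, ∑ w ∈ S, A u w ≤ 1 := by
  by_contra hcon
  push Not at hcon
  have h1 := hfor S hS
  have h2 : ∑ v ∈ S, (2 : ℤ) ≤ ∑ v ∈ S, ∑ w ∈ S, A v w :=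
    Finset.sum_le_sum fun v hv => by linarith [hcon v hv]
  simp only [Finset.sum_const, nsmul_eq_mul] at h2
  linarith

lemma deg_arith (n d m D Δ : ℤ) (hn : 3 ≤ n) (hd0 : n + 4 ≤ 2 * d) (hdΔ : d ≤ Δ) (hm0 : 0 ≤ m)
    (hm : m ≤ 2 * (n - 1) - 2 * d)
    (h : (Δ + 37) * ((n - 1) * (n - 2)) ≤ D * (2 * d * (n - 2) - 2 * m)) : n ≤ 2 * D := by
  have hB : 0 < 2 * d * (n - 2) - 2 * m := by nlinarith
  have hpos : 0 < (Δ + 37) * ((n - 1) * (n - 2)) := by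
    apply mul_pos (by linarith) (mul_pos (by linarith) (by linarith))
  have hD : 0 < D := by
    by_contra hD
    push Not at hD
    have := mul_nonpos_of_nonpos_of_nonneg hD hB.le
    linarith
  have h1 : D * (2 * d * (n - 2) - 2 * m) ≤ D * (2 * d * (n - 2)) :=
    mul_le_mul_of_nonneg_left (by linarith) hD.le
  have h2 : (d + 37) * ((n - 1) * (n - 2)) ≤ (Δ + 37) * ((n - 1) * (n - 2)) :=
    mul_le_mul_of_nonneg_right (by linarith) (mul_nonneg (by linarith) (by linarith))
  have h3 : (n - 2) * ((d + 37) * (n - 1)) ≤ (n - 2) * (2 * d * D) := by nlinarith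
  have h4 := le_of_mul_le_mul_left h3 (by linarith)
  by_contra hcon
  push Not at hcon
  have h5 : d * (2 * D) ≤ d * (n - 1) := mul_le_mul_of_nonneg_left (by linarith) (by linarith)
  nlinarith

theorem core {α : Type*} [Fintype α] [DecidableEq α] [Nonempty α] (A C : α → α → ℤ)
    (hA01 : ∀ v w, A v w = 0 ∨ A v w = 1)
    (hAs : ∀ v w, A v w = A w v) (hA0 : ∀ v, A v v = 0)
    (hfor : ∀ T : Finset α, T.Nonempty → ∑ v ∈ T, ∑ w ∈ T, A v w ≤ 2 * ((T.card : ℤ) - 1))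
    (Δ : ℤ) (hΔ : ∀ v, ∑ w, A v w ≤ Δ)
    (hC : ∀ v w, v ≠ w → C v w = 1 ∨ C v w = -1)
    (hCs : ∀ v w, C v w = C w v) (hC0 : ∀ v, C v v = 0) (hbal : ∑ v, ∑ w, C v w = 0) :
    ∃ g : Equiv.Perm α, |bval A C g| ≤ Δ + 36 := by
  classical
  by_contra hcon
  push Not at hcon
  have hAn : ∀ v w, 0 ≤ A v w := fun v w => by rcases hA01 v w with h | h <;> rw [h] <;> norm_num
  have hC1 : ∀ v w, C v w ≤ 1 := fun v w => by
    by_cases h : v = w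
    · rw [h, hC0]; norm_num
    · rcases hC v w h with h | h <;> rw [h]; norm_num
  have hC2 : ∀ v w, -1 ≤ C v w := fun v w => by
    by_cases h : v = w
    · rw [h, hC0]; norm_num
    · rcases hC v w h with h | h <;> rw [h]; norm_num
  have hΔ0 : 0 ≤ Δ := by
    obtain ⟨v⟩ := ‹Nonempty α›
    exact le_trans (Finset.sum_nonneg fun w _ => hAn v w) (hΔ v)
  have hbig : ∀ g : Equiv.Perm α, Δ + 37 ≤ bval A C g ∨ bval A C g ≤ -(Δ + 37) := by
    intro g
    have := hcon g
    rcases lt_abs.mp this with h | h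
    · left; linarith
    · right; linarith
  have htot := hfor univ Finset.univ_nonempty
  rw [Finset.card_univ] at htot
  have hn : 3 ≤ Fintype.card α := by
    have h1 : bval A C 1 ≤ ∑ v, ∑ w, A v w := by
      unfold bval
      exact Finset.sum_le_sum fun v _ => Finset.sum_le_sum fun w _ => by
        nlinarith [hAn v w, hC1 ((1 : Equiv.Perm α) v) ((1 : Equiv.Perm α) w)]
    have h2 : - ∑ v, ∑ w, A v w ≤ bval A C 1 := by
      unfold bval
      rw [← Finset.sum_neg_distrib]
      refine Finset.sum_le_sum fun v _ => ?_
      rw [← Finset.sum_neg_distrib]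
      exact Finset.sum_le_sum fun w _ => by
        nlinarith [hAn v w, hC2 ((1 : Equiv.Perm α) v) ((1 : Equiv.Perm α) w)]
    rcases hbig 1 with h | h <;> omega
  have hnZ : (3 : ℤ) ≤ Fintype.card α := by exact_mod_cast hn
  obtain ⟨l, -, hAl⟩ := low_exists A hfor univ Finset.univ_nonempty
  set S := univ.filter (fun r => ¬ ∀ g, 0 < bval A C g ↔ 0 < bval A C (g * Equiv.swap r l)) with hSdef
  have hl : l ∉ S := by simp [hSdef, ← Equiv.Perm.one_def]
  have hS : ∀ r, r ∉ S → ∀ g, 0 < bval A C g ↔ 0 < bval A C (g * Equiv.swap r l) := by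
    intro r hr
    by_contra h
    exact hr (by rw [hSdef, mem_filter]; exact ⟨mem_univ _, h⟩)
  have hinv := pos_inv (fun g => 0 < bval A C g) S l hl hS
  have hwit : ∀ r ∈ S, ∃ f : Equiv.Perm α, 0 < bval A C f ∧ ¬ 0 < bval A C (f * Equiv.swap r l) := by
    intro r hr
    rw [hSdef, mem_filter] at hr
    have h := hr.2
    push Not at h
    obtain ⟨g, hg⟩ := h
    rcases hg with hg | hg
    · exact ⟨g, hg.1, not_lt.mpr hg.2⟩
    · refine ⟨g * Equiv.swap r l, hg.2, ?_⟩
      rw [mul_assoc, Equiv.swap_mul_self, mul_one]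
      exact not_lt.mpr hg.1
  have hSne : S.Nonempty := by
    by_contra hSe
    rw [Finset.not_nonempty_iff_eq_empty] at hSe
    have hall : ∀ g : Equiv.Perm α, 0 < bval A C g ↔ 0 < bval A C 1 := fun g =>
      hinv g 1 (by simp [hSe])
    have havg := global_avg A C hA0 hC0 hbal hn
    by_cases h1 : 0 < bval A C 1
    · have : 0 < ∑ g : Equiv.Perm α, bval A C g :=
        Finset.sum_pos (fun g _ => (hall g).mpr h1) Finset.univ_nonempty
      linarith
    · have : 0 < ∑ g : Equiv.Perm α, - bval A C g :=
        Finset.sum_pos (fun g _ => by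
          have h2 : ¬ 0 < bval A C g := fun h => h1 ((hall g).mp h)
          rcases hbig g with h | h <;> linarith) Finset.univ_nonempty
      rw [Finset.sum_neg_distrib] at this
      linarith
  have hdeg : ∀ r ∈ S, 35 ≤ ∑ w, A r w := by
    intro r hr
    obtain ⟨f, hf1, hf2⟩ := hwit r hr
    have hrl : r ≠ l := fun h => hl (h ▸ hr)
    have h1 := swap_diff A C hAs hA0 hCs hC0 r l hrl f
    have h2 : ∑ w ∈ univ \ {r, l}, (A r w - A l w) * (C (f r) (f w) - C (f l) (f w))
        ≤ ∑ w ∈ univ \ {r, l}, (2 * A r w + 2 * A l w) := by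
      apply Finset.sum_le_sum
      intro w _
      nlinarith [mul_nonneg (hAn r w) (sub_nonneg.mpr (hC1 (f r) (f w))),
        mul_nonneg (hAn r w) (by linarith [hC2 (f l) (f w)] : 0 ≤ C (f l) (f w) + 1),
        mul_nonneg (hAn l w) (sub_nonneg.mpr (hC1 (f l) (f w))),
        mul_nonneg (hAn l w) (by linarith [hC2 (f r) (f w)] : 0 ≤ C (f r) (f w) + 1)]
    have h3 : ∑ w ∈ univ \ {r, l}, (2 * A r w + 2 * A l w) ≤ ∑ w, (2 * A r w + 2 * A l w) :=
      Finset.sum_le_sum_of_subset_of_nonneg (Finset.subset_univ _)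
        (fun w _ _ => by linarith [hAn r w, hAn l w])
    have h5 : ∑ w, (2 * A r w + 2 * A l w) = 2 * ∑ w, A r w + 2 * ∑ w, A l w := by
      rw [Finset.sum_add_distrib, ← Finset.mul_sum, ← Finset.mul_sum]
    rw [h5] at h3
    have h4 := hΔ r
    rcases hbig f with a | a <;> rcases hbig (f * Equiv.swap r l) with b | b <;> linarith
  have hcard : 34 * (S.card : ℤ) ≤ Fintype.card α := by
    have h1 := forest_touch A hAn hAs hfor S hSne
    have h2 : ∑ v ∈ S, (35 : ℤ) ≤ ∑ v ∈ S, ∑ w, A v w := Finset.sum_le_sum hdeg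
    simp only [Finset.sum_const, nsmul_eq_mul] at h2
    linarith
  have hsd : ∀ u ∈ S, ∑ w ∈ S, A u w ≤ 2 → (Fintype.card α : ℤ) + 4 ≤ 2 * ∑ w, A u w := by
    intro u hu h
    obtain ⟨f, hf1, hf2⟩ := hwit u hu
    exact sens_deg A C hA01 hAs hA0 hC hCs hC0 hbal S u l hu hl f Δ hΔ0 hbig hS hf1 hf2 hAl h
      (hΔ u) hcard
  obtain ⟨u, hu, hu1⟩ := low_exists A hfor S hSne
  have hdu := hsd u hu (by linarith)
  have hSu : S = {u} := by
    by_contra hne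
    have hne2 : (S.erase u).Nonempty := by
      rw [Finset.nonempty_iff_ne_empty]
      intro h
      rw [Finset.erase_eq_empty_iff] at h
      rcases h with h | h
      · rw [h] at hu; simp at hu
      · exact hne h
    obtain ⟨v, hv, hv1⟩ := low_exists A hfor (S.erase u) hne2
    have hvS := Finset.mem_of_mem_erase hv
    have hvu : u ≠ v := (Finset.ne_of_mem_erase hv).symm
    have hv2 : ∑ w ∈ S, A v w ≤ 2 := by
      rw [← Finset.add_sum_erase S _ hu]
      have : A v u ≤ 1 := by rcases hA01 v u with h | h <;> rw [h]; norm_num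
      linarith
    have hdv := hsd v hvS hv2
    have := forest_touch A hAn hAs hfor {u, v} (by simp)
    rw [Finset.sum_pair hvu, Finset.card_pair hvu] at this
    push_cast at this
    linarith
  refine star_final C hC1 hC2 hC0 hCs hbal ?_
  intro x
  set W := univ.filter (fun g : Equiv.Perm α => g u = x) with hW
  have hWne : W.Nonempty := ⟨Equiv.swap u x, by simp [hW]⟩
  have hWc : (0 : ℤ) < W.card := by exact_mod_cast hWne.card_pos
  have hca := cond_avg A C hAs hA0 hC0 hCs hbal u x
  rw [← hW] at hca
  obtain ⟨g0, hg0⟩ := hWne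
  have hall : ∀ g ∈ W, (0 < bval A C g ↔ 0 < bval A C g0) := by
    intro g hg
    apply hinv
    intro v hv
    rw [hSu, Finset.mem_singleton] at hv
    rw [hW, mem_filter] at hg hg0
    rw [hv, hg.2, hg0.2]
  set m := ∑ v ∈ univ.erase u, ∑ w ∈ univ.erase u, A v w with hm
  have hm0 : 0 ≤ m := Finset.sum_nonneg fun v _ => Finset.sum_nonneg fun w _ => hAn v w
  have hm1 : ∑ v, ∑ w, A v w = 2 * ∑ w, A u w + m := by
    have hs : ∀ φ : α → ℤ, ∑ w, φ w = φ u + ∑ w ∈ univ.erase u, φ w := fun φ =>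
      (Finset.add_sum_erase univ φ (mem_univ u)).symm
    rw [hs]
    simp only [hs (fun w => A _ w), Finset.sum_add_distrib, hA0]
    rw [Finset.sum_congr rfl (fun w _ => hAs w u : ∀ w ∈ univ.erase u, A w u = A u w)]
    ring
  have hnn : 0 ≤ ((Fintype.card α : ℤ) - 1) * (Fintype.card α - 2) :=
    mul_nonneg (by linarith) (by linarith)
  by_cases hpos : 0 < bval A C g0
  · left
    have h1 : ∑ g ∈ W, (Δ + 37) ≤ ∑ g ∈ W, bval A C g := Finset.sum_le_sum fun g hg => by
      have := (hall g hg).mpr hpos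
      rcases hbig g with h | h <;> linarith
    rw [Finset.sum_const, nsmul_eq_mul] at h1
    have h2 := mul_le_mul_of_nonneg_left h1 hnn
    rw [hca] at h2
    refine deg_arith _ (∑ w, A u w) m _ Δ hnZ hdu (hΔ u) hm0 (by linarith) ?_
    refine le_of_mul_le_mul_left ?_ hWc
    linarith
  · right
    have h1 : ∑ g ∈ W, bval A C g ≤ ∑ g ∈ W, -(Δ + 37) := Finset.sum_le_sum fun g hg => by
      have : ¬ 0 < bval A C g := fun h => hpos ((hall g hg).mp h)
      rcases hbig g with h | h <;> linarith
    rw [Finset.sum_const, nsmul_eq_mul] at h1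
    have h2 := mul_le_mul_of_nonneg_left h1 hnn
    rw [hca] at h2
    have : (Fintype.card α : ℤ) ≤ 2 * (- ∑ w, C x w) := by
      refine deg_arith _ (∑ w, A u w) m _ Δ hnZ hdu (hΔ u) hm0 (by linarith) ?_
      refine le_of_mul_le_mul_left ?_ hWc
      linarith
    linarith

/-- If `c` is a balanced `±1`-colouring of the edges of the complete
graph on `n` vertices and `F` is a forest on `n` vertices with maximum degree `Δ`,
then there is a copy `F'` of `F` in `K_n` with `|c(F')| ≤ Δ/2 + 18`. -/
theorem almost_balanced_spanning_forest
    (n : ℕ) (F : SimpleGraph (Fin n)) [DecidableRel F.Adj]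
    (hF : F.IsAcyclic) (Δ : ℕ) (hΔ : F.maxDegree = Δ)
    (c : Sym2 (Fin n) → ℤ)
    (hc : ∀ e ∈ (⊤ : SimpleGraph (Fin n)).edgeFinset, c e = 1 ∨ c e = -1)
    (hbal : ∑ e ∈ (⊤ : SimpleGraph (Fin n)).edgeFinset, c e = 0) :
    ∃ f : Fin n ↪ Fin n,
      |(∑ e ∈ F.edgeFinset, c (Sym2.map (⇑f) e) : ℝ)| ≤ (Δ : ℝ) / 2 + 18 := by
  rcases Nat.eq_zero_or_pos n with hn | hn
  · subst hn
    refine ⟨Function.Embedding.refl _, ?_⟩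
    have : F.edgeFinset = ∅ := by
      ext e
      induction e using Sym2.ind with
      | _ a b => exact a.elim0
    rw [this]
    simp
    positivity
  have : Nonempty (Fin n) := ⟨⟨0, hn⟩⟩
  obtain ⟨g, hg⟩ := core (fun v w => if F.Adj v w then (1 : ℤ) else 0)
    (fun v w => if v ≠ w then c s(v, w) else 0)
    (fun v w => by by_cases h : F.Adj v w <;> simp [h])
    (fun v w => by simp [F.adj_comm]) (by simp) (forest_sum F hF) Δ
    (fun v => by
      have h1 := F.degree_le_maxDegree v
      rw [hΔ, ← SimpleGraph.card_neighborFinset_eq_degree,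
        SimpleGraph.neighborFinset_eq_filter, Finset.card_filter] at h1
      exact_mod_cast h1)
    (fun v w h => by
      rw [if_pos h]
      exact hc _ (by simpa using h))
    (fun v w => by rw [Sym2.eq_swap]; simp [eq_comm])
    (by simp)
    (by
      have := dart_sum (⊤ : SimpleGraph (Fin n)) c
      simp only [SimpleGraph.top_adj] at this
      rw [this, hbal, mul_zero])
  refine ⟨g.toEmbedding, ?_⟩
  have h1 := dart_sum F (fun e => c (Sym2.map g e))
  have h2 : bval (fun v w => if F.Adj v w then (1 : ℤ) else 0)
    (fun v w => if v ≠ w then c s(v, w) else 0) g = 2 * ∑ e ∈ F.edgeFinset, c (Sym2.map g e) := by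
    rw [← h1]
    unfold bval
    refine Finset.sum_congr rfl fun v _ => Finset.sum_congr rfl fun w _ => ?_
    by_cases h : F.Adj v w
    · simp [h, h.ne]
    · simp [h]
  rw [h2, abs_mul] at hg
  have h3 : (2 : ℝ) * |((∑ e ∈ F.edgeFinset, c (Sym2.map g e) : ℤ) : ℝ)| ≤ Δ + 36 := by
    exact_mod_cast hg
  push_cast at h3
  change |(∑ e ∈ F.edgeFinset, (c (Sym2.map g e) : ℝ))| ≤ _
  linarith
end

section
/- Let n be an integer, let F be a forest on n vertices with maximum degree Δ satisfying Δ ≥ n/2 or Δ ≤ 15, and let c : E(K_n) → {−1, +1} be a balanced colouring of the edges of K_n. Then there exists a copy F' of F in K_n such that |c(F')| ≤ Δ/2 + 9. -/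
open Finset

section ABSF
set_option linter.unusedSectionVars false
variable {V : Type*} [Fintype V] [DecidableEq V]

structure ABCol (a : V → V → ℤ) : Prop where
  symm : ∀ i j, a i j = a j i
  diag : ∀ i, a i i = 0
  pm : ∀ i j, i ≠ j → a i j = 1 ∨ a i j = -1

lemma ABCol.neg {a : V → V → ℤ} (h : ABCol a) : ABCol (fun i j => - a i j) :=
  ⟨fun i j => by simp only [h.symm i j], fun i => by simp [h.diag i],
   fun i j hij => by rcases h.pm i j hij with h | h <;> simp [h]⟩

lemma ABCol.le {a : V → V → ℤ} (h : ABCol a) (i j) : a i j ≤ 1 := by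
  by_cases hij : i = j
  · subst hij; simp [h.diag]
  · rcases h.pm i j hij with h | h <;> simp [h]

lemma ABCol.ge {a : V → V → ℤ} (h : ABCol a) (i j) : -1 ≤ a i j := by
  by_cases hij : i = j
  · subst hij; simp [h.diag]
  · rcases h.pm i j hij with h | h <;> simp [h]

def abW (F : SimpleGraph V) [DecidableRel F.Adj] (a : V → V → ℤ) (σ : Equiv.Perm V) : ℤ :=
  ∑ i, ∑ j, if F.Adj i j then a (σ i) (σ j) else 0

lemma abW_neg (F : SimpleGraph V) [DecidableRel F.Adj] (a : V → V → ℤ) (σ : Equiv.Perm V) :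
    abW F (fun i j => - a i j) σ = - abW F a σ := by
  unfold abW
  rw [← sum_neg_distrib]
  refine sum_congr rfl fun i _ => ?_
  rw [← sum_neg_distrib]
  refine sum_congr rfl fun j _ => ?_
  split_ifs <;> simp

lemma ab_sum_edge (F : SimpleGraph V) [DecidableRel F.Adj] (g : Sym2 V → ℤ) :
    ∑ i, ∑ j, (if F.Adj i j then g s(i, j) else 0) = 2 * ∑ e ∈ F.edgeFinset, g e := by
  have h1 : ∑ d : F.Dart, g d.edge = 2 * ∑ e ∈ F.edgeFinset, g e := by
    rw [← sum_fiberwise_of_maps_to (s := univ) (t := F.edgeFinset) (g := fun d : F.Dart => d.edge)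
      (fun d _ => by rw [SimpleGraph.mem_edgeFinset]; exact d.edge_mem), mul_sum]
    refine sum_congr rfl fun e he => ?_
    rw [sum_congr rfl (g := fun _ => g e) (fun d hd => by rw [(mem_filter.1 hd).2]), sum_const,
      F.dart_edge_fiber_card e (by simpa using he)]
    simp
  rw [← h1, ← Fintype.sum_prod_type' (f := fun i j => if F.Adj i j then g s(i, j) else 0),
    ← sum_filter]
  refine sum_bij' (fun xy h ↦ ⟨xy, (mem_filter.1 h).2⟩) (fun d _ ↦ (d.fst, d.snd)) ?_ ?_ ?_ ?_ ?_
    <;> simp [SimpleGraph.Dart.edge]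

lemma ab_deg_left (F : SimpleGraph V) [DecidableRel F.Adj] (u : V) :
    ∑ i, ∑ j, (if F.Adj i j then (if i = u then (1:ℤ) else 0) else 0) = F.degree u := by
  rw [sum_eq_single u]
  · simp [← SimpleGraph.card_neighborFinset_eq_degree, SimpleGraph.neighborFinset_eq_filter]
  · intro b _ hb; simp [hb]
  · simp

lemma ab_deg_right (F : SimpleGraph V) [DecidableRel F.Adj] (u : V) :
    ∑ i, ∑ j, (if F.Adj i j then (if j = u then (1:ℤ) else 0) else 0) = F.degree u := by
  rw [sum_comm, ← ab_deg_left]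
  simp only [F.adj_comm]

lemma ab_sum_star (F : SimpleGraph V) [DecidableRel F.Adj] (u : V) (g : V → ℤ) :
    ∑ i, ∑ j, (if F.Adj i j then (if i = u then g j else 0) else 0)
      = ∑ j ∈ F.neighborFinset u, g j := by
  rw [sum_eq_single u]
  · simp [SimpleGraph.neighborFinset_eq_filter, sum_filter]
  · intro b _ hb; simp [hb]
  · simp

lemma ab_sum_star' (F : SimpleGraph V) [DecidableRel F.Adj] (u : V) (g : V → ℤ) :
    ∑ i, ∑ j, (if F.Adj i j then (if j = u then g i else 0) else 0)
      = ∑ j ∈ F.neighborFinset u, g j := by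
  rw [sum_comm, ← ab_sum_star]
  simp only [F.adj_comm]

lemma ab_sum_one (F : SimpleGraph V) [DecidableRel F.Adj] :
    ∑ i, ∑ j, (if F.Adj i j then (1:ℤ) else 0) = 2 * #F.edgeFinset := by
  rw [ab_sum_edge F (fun _ => 1)]; simp

lemma ab_swap_step (F : SimpleGraph V) [DecidableRel F.Adj] {a : V → V → ℤ} (h : ABCol a)
    (σ : Equiv.Perm V) (u v : V) :
    |abW F a (σ * Equiv.swap u v) - abW F a σ| ≤ 4 * (F.degree u + F.degree v) := by
  have key : ∀ i j, |(if F.Adj i j then a ((σ * Equiv.swap u v) i) ((σ * Equiv.swap u v) j) else 0)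
      - (if F.Adj i j then a (σ i) (σ j) else 0)| ≤
      2 * (if F.Adj i j then (if i = u then (1:ℤ) else 0) else 0)
      + 2 * (if F.Adj i j then (if i = v then (1:ℤ) else 0) else 0)
      + 2 * (if F.Adj i j then (if j = u then (1:ℤ) else 0) else 0)
      + 2 * (if F.Adj i j then (if j = v then (1:ℤ) else 0) else 0) := by
    intro i j
    by_cases hij : F.Adj i j
    · simp only [hij, if_true]
      by_cases hh : i = u ∨ i = v ∨ j = u ∨ j = v
      · have h1 := h.le ((σ * Equiv.swap u v) i) ((σ * Equiv.swap u v) j)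
        have h2 := h.ge ((σ * Equiv.swap u v) i) ((σ * Equiv.swap u v) j)
        have h3 := h.le (σ i) (σ j)
        have h4 := h.ge (σ i) (σ j)
        have h5 : |a ((σ * Equiv.swap u v) i) ((σ * Equiv.swap u v) j) - a (σ i) (σ j)| ≤ 2 := by
          rw [abs_le]; constructor <;> linarith
        refine h5.trans ?_
        rcases hh with hh | hh | hh | hh <;> simp only [hh, if_true] <;> split_ifs <;> norm_num
      · push Not at hh
        obtain ⟨h1, h2, h3, h4⟩ := hh
        simp [h1, h2, h3, h4, Equiv.swap_apply_of_ne_of_ne]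
    · simp [hij]
  unfold abW
  rw [← sum_sub_distrib]
  simp_rw [← sum_sub_distrib]
  calc _ ≤ ∑ i, ∑ j, _ := (abs_sum_le_sum_abs _ _).trans
          (sum_le_sum fun i _ => (abs_sum_le_sum_abs _ _).trans (sum_le_sum fun j _ => key i j))
    _ = 4 * (F.degree u + F.degree v) := by
      simp only [sum_add_distrib, ← mul_sum, ab_deg_left, ab_deg_right]
      ring

/-- positivity propagates through permutations agreeing off the free set -/
lemma ab_propagate (F : SimpleGraph V) [DecidableRel F.Adj] {a : V → V → ℤ} (h : ABCol a)
    (K : ℤ) (hno : ∀ σ, K < abW F a σ ∨ abW F a σ < -K) (S : Finset V) (l : V)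
    (hl : F.degree l ≤ 1) (hlS : l ∈ S) (hS : ∀ v ∈ S, 4 * ((F.degree v : ℤ) + 1) ≤ 2 * K) :
    ∀ (m : ℕ) (σ τ : Equiv.Perm V), #{v | σ v ≠ τ v} = m → (∀ v, v ∉ S → σ v = τ v) →
      K < abW F a σ → K < abW F a τ := by
  have step1 : ∀ σ, ∀ v ∈ S, K < abW F a σ → K < abW F a (σ * Equiv.swap l v) := by
    intro σ v hv hσ
    have h1 := ab_swap_step F h σ l v
    have h2 := hS v hv
    rcases hno (σ * Equiv.swap l v) with h3 | h3
    · exact h3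
    · rw [abs_le] at h1
      have : (F.degree l : ℤ) ≤ 1 := by exact_mod_cast hl
      linarith [h1.1]
  have step2 : ∀ σ, ∀ u ∈ S, ∀ v ∈ S, u ≠ v → K < abW F a σ →
      K < abW F a (σ * Equiv.swap u v) := by
    intro σ u hu v hv huv hσ
    by_cases h1 : u = l
    · subst h1; exact step1 σ v hv hσ
    by_cases h2 : v = l
    · subst h2; rw [Equiv.swap_comm]; exact step1 σ u hu hσ
    have := step1 _ u hu (step1 _ v hv (step1 σ u hu hσ))
    have e : Equiv.swap u v = Equiv.swap l u * Equiv.swap l v * Equiv.swap l u := by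
      ext x
      simp only [Equiv.Perm.mul_apply, Equiv.swap_apply_def]
      grind
    rw [e, ← mul_assoc, ← mul_assoc]
    exact this
  intro m
  induction m using Nat.strong_induction_on with
  | _ m ih =>
    intro σ τ hm hag hσ
    by_cases hne : σ = τ
    · exact hne ▸ hσ
    obtain ⟨v, hv⟩ : ∃ v, σ v ≠ τ v := by
      by_contra hcon
      push Not at hcon
      exact hne (Equiv.ext hcon)
    have hvS : v ∈ S := by
      by_contra hh; exact hv (hag v hh)
    obtain ⟨u, hu⟩ := σ.surjective (τ v)
    have huv : u ≠ v := by rintro rfl; exact hv hu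
    have hud : σ u ≠ τ u := by
      rw [hu]; intro hh; exact huv (τ.injective hh).symm
    have huS : u ∈ S := by
      by_contra hh; exact hud (hag u hh)
    refine ih _ ?_ (σ * Equiv.swap u v) τ rfl ?_ (step2 σ u huS v hvS huv hσ)
    · rw [← hm]
      apply card_lt_card
      rw [ssubset_iff_of_subset]
      · refine ⟨v, by simpa using hv, fun hh => (mem_filter.1 hh).2 (by simp [hu])⟩
      · intro x hx
        rw [mem_filter] at hx ⊢
        refine ⟨mem_univ _, ?_⟩
        replace hx := hx.2
        by_cases hxu : x = u
        · subst hxu; exact hud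
        by_cases hxv : x = v
        · subst hxv; exact hv
        rwa [Equiv.Perm.mul_apply, Equiv.swap_apply_of_ne_of_ne hxu hxv] at hx
    · intro x hx
      have hxu : x ≠ u := by rintro rfl; exact hx huS
      have hxv : x ≠ v := by rintro rfl; exact hx hvS
      rw [Equiv.Perm.mul_apply, Equiv.swap_apply_of_ne_of_ne hxu hxv]
      exact hag x hx

lemma abW_ge_star (F : SimpleGraph V) [DecidableRel F.Adj] {a : V → V → ℤ} (h : ABCol a)
    (σ : Equiv.Perm V) (w : V) :
    2 * ∑ j ∈ F.neighborFinset w, a (σ w) (σ j) + 2 * F.degree w - 2 * #F.edgeFinset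
      ≤ abW F a σ := by
  have key : ∀ i j, (if F.Adj i j then (if i = w then a (σ w) (σ j) else 0) else 0)
      + (if F.Adj i j then (if j = w then a (σ w) (σ i) else 0) else 0)
      + (if F.Adj i j then (if i = w then (1:ℤ) else 0) else 0)
      + (if F.Adj i j then (if j = w then (1:ℤ) else 0) else 0)
      - (if F.Adj i j then (1:ℤ) else 0) ≤ if F.Adj i j then a (σ i) (σ j) else 0 := by
    intro i j
    by_cases hij : F.Adj i j
    · simp only [hij, if_true]
      have := h.ge (σ i) (σ j)
      have hne := hij.ne
      by_cases h1 : i = w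
      · subst h1; simp [hne.symm]
      · by_cases h2 : j = w
        · subst h2; simp [hne, h.symm (σ i)]
        · simp [h1, h2, this]
    · simp [hij]
  have := sum_le_sum fun i (_ : i ∈ (univ : Finset V)) =>
    sum_le_sum fun j (_ : j ∈ (univ : Finset V)) => key i j
  simp only [sum_add_distrib, sum_sub_distrib, ab_deg_left, ab_deg_right, ab_sum_one] at this
  rw [ab_sum_star F w (fun j => a (σ w) (σ j)), ab_sum_star' F w (fun j => a (σ w) (σ j))] at this
  unfold abW
  linarith

lemma ab_greedy (F : SimpleGraph V) [DecidableRel F.Adj] {a : V → V → ℤ} (h : ABCol a)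
    (hm : #F.edgeFinset + 1 ≤ Fintype.card V) (w y : V) (hw : Fintype.card V ≤ 2 * F.degree w)
    (σ₀ : Equiv.Perm V) (hs : 0 ≤ ∑ j, a (σ₀ w) j) :
    ∃ σ : Equiv.Perm V, σ w = σ₀ w ∧ σ y = σ₀ y ∧ -4 ≤ abW F a σ := by
  obtain ⟨σ, hσ, hmax⟩ := exists_max_image
    ({σ | σ w = σ₀ w ∧ σ y = σ₀ y} : Finset (Equiv.Perm V))
    (fun σ => ∑ j ∈ F.neighborFinset w, a (σ w) (σ j)) ⟨σ₀, by simp⟩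
  simp only [mem_filter, mem_univ, true_and] at hσ hmax
  refine ⟨σ, hσ.1, hσ.2, ?_⟩
  have hloc : ∀ u v, ¬ F.Adj w u → u ≠ w → u ≠ y → F.Adj w v → v ≠ y →
      a (σ w) (σ u) ≤ a (σ w) (σ v) := by
    intro u v hu huw huy hv hvy
    have hvw : v ≠ w := hv.ne'
    have e1 : (σ * Equiv.swap u v) w = σ w := by
      rw [Equiv.Perm.mul_apply, Equiv.swap_apply_of_ne_of_ne huw.symm hvw.symm]
    have e2 : (σ * Equiv.swap u v) y = σ y := by
      rw [Equiv.Perm.mul_apply, Equiv.swap_apply_of_ne_of_ne huy.symm hvy.symm]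
    have := hmax (σ * Equiv.swap u v) ⟨by rw [e1, hσ.1], by rw [e2, hσ.2]⟩
    rw [e1] at this
    have hvN : v ∈ F.neighborFinset w := by simpa using hv
    rw [← add_sum_erase _ _ hvN, ← add_sum_erase _ _ hvN] at this
    rw [sum_congr rfl (g := fun j => a (σ w) (σ j)) (s₁ := (F.neighborFinset w).erase v)] at this
    · simpa using this
    · intro j hj
      simp only [mem_erase, SimpleGraph.mem_neighborFinset] at hj
      have : j ≠ u := by rintro rfl; exact hu hj.2
      rw [Equiv.Perm.mul_apply, Equiv.swap_apply_of_ne_of_ne this hj.1]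
  have hge := abW_ge_star F h σ w
  by_cases hall : ∀ v, F.Adj w v → v ≠ y → a (σ w) (σ v) = 1
  · have : ∑ j ∈ F.neighborFinset w, ((1:ℤ) - if j = y then 2 else 0)
        ≤ ∑ j ∈ F.neighborFinset w, a (σ w) (σ j) := by
      refine sum_le_sum fun j hj => ?_
      by_cases hjy : j = y
      · simpa [hjy] using h.ge (σ w) (σ y)
      · simp [hjy, hall j (by simpa using hj) hjy]
    rw [sum_sub_distrib, sum_ite_eq'] at this
    simp only [sum_const, SimpleGraph.card_neighborFinset_eq_degree, nsmul_eq_mul, mul_one] at this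
    have h2 : (if y ∈ F.neighborFinset w then (2:ℤ) else 0) ≤ 2 := by split_ifs <;> norm_num
    have : (#F.edgeFinset : ℤ) + 1 ≤ Fintype.card V := by exact_mod_cast hm
    have : (Fintype.card V : ℤ) ≤ 2 * F.degree w := by exact_mod_cast hw
    linarith
  · push Not at hall
    obtain ⟨v, hv, hvy, hva⟩ := hall
    have hva' : a (σ w) (σ v) = -1 :=
      (h.pm _ _ (fun hh => hv.ne (σ.injective hh))).resolve_left hva
    have hout : ∀ j, a (σ w) (σ j) ≤ (if F.Adj w j then a (σ w) (σ j) else 0) - 1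
        + (if F.Adj w j then 1 else 0) + (if j = w then 1 else 0) + (if j = y then 2 else 0) := by
      intro j
      by_cases h1 : F.Adj w j
      · simp only [h1, if_true]; split_ifs <;> linarith
      · simp only [h1, if_false]
        by_cases h2 : j = w
        · subst h2; simp [h.diag]; split_ifs <;> norm_num
        · by_cases h3 : j = y
          · simp only [h2, h3, if_true]; have := h.le (σ w) (σ y); split_ifs <;> linarith
          · have := hloc j v h1 h2 h3 hv hvy
            simp [h2, h3]; linarith
    have hsum := sum_le_sum fun j (_ : j ∈ (univ : Finset V)) => hout j
    have hre : ∑ j, a (σ w) (σ j) = ∑ j, a (σ₀ w) j := by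
      rw [hσ.1]; exact Equiv.sum_comp σ (fun j => a (σ₀ w) j)
    rw [hre] at hsum
    simp only [sum_add_distrib, sum_sub_distrib, sum_ite_eq', mem_univ, if_true, ← sum_filter,
      ← SimpleGraph.neighborFinset_eq_filter, sum_const,
      SimpleGraph.card_neighborFinset_eq_degree, nsmul_eq_mul, mul_one, card_univ] at hsum
    have : (#F.edgeFinset : ℤ) + 1 ≤ Fintype.card V := by exact_mod_cast hm
    linarith

/-- the summed weight of a pair -/
def abH (Ω : Finset (Equiv.Perm V)) (a : V → V → ℤ) (u v : V) : ℤ := ∑ σ ∈ Ω, a (σ u) (σ v)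

lemma abH_symm {a : V → V → ℤ} (h : ABCol a) (Ω : Finset (Equiv.Perm V)) (u v : V) :
    abH Ω a u v = abH Ω a v u := sum_congr rfl fun _ _ => h.symm _ _

lemma abH_move (Ω : Finset (Equiv.Perm V)) (a : V → V → ℤ) (u u' v : V)
    (hΩ : ∀ σ ∈ Ω, σ * Equiv.swap u u' ∈ Ω) (hu : v ≠ u) (hu' : v ≠ u') :
    abH Ω a u v = abH Ω a u' v := by
  unfold abH
  refine sum_bij' (fun σ _ => σ * Equiv.swap u u') (fun σ _ => σ * Equiv.swap u u')
    hΩ hΩ ?_ ?_ ?_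
  · intro σ _; simp [mul_assoc]
  · intro σ _; simp [mul_assoc]
  · intro σ _; simp [Equiv.swap_apply_of_ne_of_ne hu hu']

lemma abH_const {a : V → V → ℤ} (h : ABCol a) (Ω : Finset (Equiv.Perm V)) (S : Finset V)
    (hΩ : ∀ σ ∈ Ω, ∀ u ∈ S, ∀ v ∈ S, σ * Equiv.swap u v ∈ Ω) (u v : V) (hu : u ∈ S) (hv : v ∈ S)
    (huv : u ≠ v) :
    (#S : ℤ) * (#S - 1) * abH Ω a u v = ∑ σ ∈ Ω, ∑ i ∈ S, ∑ j ∈ S, a (σ i) (σ j) := by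
  have row : ∀ i ∈ S, ∀ j ∈ S, ∀ j' ∈ S, j ≠ i → j' ≠ i → abH Ω a i j = abH Ω a i j' := by
    intro i hi j hj j' hj' h1 h2
    rw [abH_symm h, abH_symm h Ω i j']
    exact abH_move Ω a j j' i (fun σ hσ => hΩ σ hσ j hj j' hj') h1.symm h2.symm
  have all : ∀ i ∈ S, ∀ j ∈ S, i ≠ j → abH Ω a i j = abH Ω a u v := by
    intro i hi j hj hij
    by_cases h1 : i = u
    · subst h1; exact row _ hi j hj v hv hij.symm huv.symm
    · rw [row i hi j hj u hu hij.symm (Ne.symm h1), abH_symm h]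
      exact row u hu i hi v hv h1 huv.symm
  have diag : ∀ i, abH Ω a i i = 0 := fun i => by simp [abH, h.diag]
  have e : ∑ σ ∈ Ω, ∑ i ∈ S, ∑ j ∈ S, a (σ i) (σ j) = ∑ i ∈ S, ∑ j ∈ S, abH Ω a i j := by
    rw [sum_comm]
    refine sum_congr rfl fun i _ => ?_
    rw [sum_comm]; rfl
  rw [e]
  have : ∀ i ∈ S, ∑ j ∈ S, abH Ω a i j = (#S - 1) * abH Ω a u v := by
    intro i hi
    rw [← add_sum_erase _ _ hi, diag, zero_add, sum_congr rfl (g := fun _ => abH Ω a u v)]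
    · rw [sum_const, card_erase_of_mem hi, nsmul_eq_mul, Nat.cast_pred (card_pos.2 ⟨i, hi⟩)]
    · intro j hj
      exact all i hi j (mem_of_mem_erase hj) (ne_of_mem_erase hj).symm
  rw [sum_congr rfl this, sum_const, nsmul_eq_mul]; ring

lemma abW_sum (F : SimpleGraph V) [DecidableRel F.Adj] (a : V → V → ℤ)
    (Ω : Finset (Equiv.Perm V)) :
    ∑ σ ∈ Ω, abW F a σ = ∑ i, ∑ j, if F.Adj i j then abH Ω a i j else 0 := by
  unfold abW
  rw [sum_comm]
  refine sum_congr rfl fun i _ => ?_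
  rw [sum_comm]
  refine sum_congr rfl fun j _ => ?_
  split_ifs <;> simp [abH]

lemma abW_mean_zero (F : SimpleGraph V) [DecidableRel F.Adj] {a : V → V → ℤ} (h : ABCol a)
    (hb : ∑ i, ∑ j, a i j = 0) : ∑ σ, abW F a σ = 0 := by
  rw [abW_sum]
  refine sum_eq_zero fun i _ => sum_eq_zero fun j _ => ?_
  split_ifs with hij
  · have := abH_const h univ univ (by simp) i j (by simp) (by simp) hij.ne
    have e : ∀ σ : Equiv.Perm V, ∑ i, ∑ j, a (σ i) (σ j) = 0 := by
      intro σ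
      rw [← hb, ← Equiv.sum_comp σ (fun i => ∑ j, a i j)]
      refine sum_congr rfl fun i _ => ?_
      exact Equiv.sum_comp σ (fun j => a (σ i) j)
    rw [sum_congr rfl (fun σ _ => e σ), sum_const_zero] at this
    have h2 : 1 < #(univ : Finset V) := one_lt_card.2 ⟨i, by simp, j, by simp, hij.ne⟩
    have h2' : (1:ℤ) < #(univ : Finset V) := by exact_mod_cast h2
    have : (0:ℤ) < (#(univ : Finset V) : ℤ) * (#(univ : Finset V) - 1) := by
      apply mul_pos <;> linarith
    rcases mul_eq_zero.1 ‹_› with h | h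
    · omega
    · exact h
  · rfl

lemma ab_mean (F : SimpleGraph V) [DecidableRel F.Adj] {a : V → V → ℤ} (h : ABCol a)
    (hb : ∑ i, ∑ j, a i j = 0) (w x : V) (hs : 0 ≤ ∑ j, a x j) (h3 : 3 ≤ Fintype.card V)
    (K : ℤ) (hK : ∀ σ : Equiv.Perm V, σ w = x → K ≤ abW F a σ) :
    (Fintype.card V - 1 : ℤ) * K ≤ 2 * F.degree w * ∑ j, a x j := by
  set Ω : Finset (Equiv.Perm V) := {σ | σ w = x} with hΩdef
  set S : Finset V := univ.erase w with hS
  have hcS : (#S : ℤ) = Fintype.card V - 1 := by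
    rw [hS, card_erase_of_mem (mem_univ _), card_univ, Nat.cast_pred (by omega)]
  have hΩ : ∀ σ ∈ Ω, ∀ u ∈ S, ∀ v ∈ S, σ * Equiv.swap u v ∈ Ω := by
    intro σ hσ u hu v hv
    simp only [hΩdef, mem_filter, mem_univ, true_and, hS, mem_erase, and_true] at *
    rw [Equiv.Perm.mul_apply, Equiv.swap_apply_of_ne_of_ne (Ne.symm hu) (Ne.symm hv), hσ]
  have hΩne : 0 < #Ω := card_pos.2 ⟨Equiv.swap w x, by simp [hΩdef]⟩
  have h3' : (3:ℤ) ≤ Fintype.card V := by exact_mod_cast h3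
  have hrow : ∀ σ ∈ Ω, ∑ j ∈ S, a (σ w) (σ j) = ∑ j, a x j := by
    intro σ hσ
    have hσ' : σ w = x := by simpa [hΩdef] using hσ
    rw [← Equiv.sum_comp σ, ← add_sum_erase _ _ (mem_univ w), hσ', h.diag, zero_add]
  have hin : ∀ σ ∈ Ω, ∑ i ∈ S, ∑ j ∈ S, a (σ i) (σ j) = - 2 * ∑ j, a x j := by
    intro σ hσ
    have hσ' : σ w = x := by simpa [hΩdef] using hσ
    have t : ∑ i, ∑ j, a (σ i) (σ j) = 0 := by
      rw [← hb, ← Equiv.sum_comp σ (fun i => ∑ j, a i j)]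
      refine sum_congr rfl fun i _ => ?_
      exact Equiv.sum_comp σ (fun j => a (σ i) j)
    have t2 : ∀ i, ∑ j, a (σ i) (σ j) = a (σ w) (σ i) + ∑ j ∈ S, a (σ i) (σ j) := by
      intro i
      rw [← add_sum_erase _ _ (mem_univ w), h.symm (σ i)]
    rw [← add_sum_erase _ _ (mem_univ w), sum_congr rfl (fun i _ => t2 i), sum_add_distrib, t2 w,
      ← hS, hrow σ hσ, h.diag] at t
    linarith
  have hneg : ∀ i j, i ≠ w → j ≠ w → i ≠ j → abH Ω a i j ≤ 0 := by
    intro i j hi hj hij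
    have := abH_const h Ω S hΩ i j (by simp [hS, hi]) (by simp [hS, hj]) hij
    rw [sum_congr rfl hin, sum_const, nsmul_eq_mul, hcS] at this
    by_contra hcon
    push Not at hcon
    have p : 0 < ((Fintype.card V : ℤ) - 1) * (Fintype.card V - 1 - 1) * abH Ω a i j :=
      mul_pos (mul_pos (by linarith) (by linarith)) hcon
    have q : 0 ≤ (#Ω : ℤ) * ∑ j, a x j := mul_nonneg (by positivity) hs
    linarith
  have hk : ∀ v, v ≠ w → (Fintype.card V - 1 : ℤ) * abH Ω a w v = #Ω * ∑ j, a x j := by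
    intro v hv
    have e : ∑ j ∈ S, abH Ω a w j = #Ω * ∑ j, a x j := by
      unfold abH
      rw [sum_comm, sum_congr rfl hrow, sum_const, nsmul_eq_mul]
    rw [← e, sum_congr rfl (g := fun _ => abH Ω a w v), sum_const, nsmul_eq_mul, hcS]
    intro j hj
    have hj' : j ≠ w := ne_of_mem_erase hj
    rw [abH_symm h, abH_symm h Ω w v]
    exact abH_move Ω a j v w (fun σ hσ => hΩ σ hσ j hj v (by simp [hS, hv])) hj'.symm hv.symm
  have key : ∀ i j, (if F.Adj i j then abH Ω a i j else 0) ≤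
      (if F.Adj i j then (if i = w then abH Ω a w j else 0) else 0)
      + (if F.Adj i j then (if j = w then abH Ω a w i else 0) else 0) := by
    intro i j
    by_cases hij : F.Adj i j
    · simp only [hij, if_true]
      have hne := hij.ne
      by_cases h1 : i = w
      · subst h1; simp [hne.symm]
      · by_cases h2 : j = w
        · subst h2; simp [hne, abH_symm h Ω i]
        · simp [h1, h2, hneg i j h1 h2 hne]
    · simp [hij]
  have hsum := sum_le_sum fun i (_ : i ∈ (univ : Finset V)) =>
    sum_le_sum fun j (_ : j ∈ (univ : Finset V)) => key i j
  rw [← abW_sum] at hsum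
  simp only [sum_add_distrib] at hsum
  rw [ab_sum_star F w (fun j => abH Ω a w j), ab_sum_star' F w (fun j => abH Ω a w j)] at hsum
  have hlow : (#Ω : ℤ) * K ≤ ∑ σ ∈ Ω, abW F a σ := by
    rw [← nsmul_eq_mul]
    exact card_nsmul_le_sum _ _ _ (fun σ hσ => hK σ (by simpa [hΩdef] using hσ))
  have hst : (Fintype.card V - 1 : ℤ) * ∑ j ∈ F.neighborFinset w, abH Ω a w j
      = F.degree w * (#Ω * ∑ j, a x j) := by
    rw [mul_sum, sum_congr rfl (g := fun _ => #Ω * ∑ j, a x j), sum_const,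
      SimpleGraph.card_neighborFinset_eq_degree, nsmul_eq_mul]
    intro j hj
    exact hk j (by simp at hj; exact hj.ne')
  have hΩ' : (0:ℤ) < #Ω := by exact_mod_cast hΩne
  have : (#Ω : ℤ) * ((Fintype.card V - 1 : ℤ) * K) ≤ #Ω * (2 * F.degree w * ∑ j, a x j) := by
    have := mul_le_mul_of_nonneg_left (hlow.trans hsum)
      (by linarith : (0:ℤ) ≤ (Fintype.card V - 1 : ℤ))
    rw [mul_add, hst] at this
    linarith
  exact le_of_mul_le_mul_left this hΩ'

lemma ab_edges (F : SimpleGraph V) [DecidableRel F.Adj] [Nonempty V] (hF : F.IsAcyclic) :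
    #F.edgeFinset + 1 ≤ Fintype.card V := by
  classical
  obtain ⟨T, hFT, -, hT⟩ :=
    SimpleGraph.connected_top.exists_isTree_le_of_le_of_isAcyclic (le_top : F ≤ ⊤) hF
  have := hT.card_edgeFinset
  have h2 : #F.edgeFinset ≤ #T.edgeFinset := card_le_card (SimpleGraph.edgeFinset_mono hFT)
  omega

lemma ab_three (F : SimpleGraph V) [DecidableRel F.Adj] (x y z : V) (hxy : x ≠ y) (hxz : x ≠ z)
    (hyz : y ≠ z) : F.degree x + F.degree y + F.degree z ≤ #F.edgeFinset + 3 := by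
  have inter : ∀ u v, u ≠ v → #(F.incidenceFinset u ∩ F.incidenceFinset v) ≤ 1 := by
    intro u v huv
    rw [← card_singleton s(u, v)]
    apply card_le_card
    intro e he
    have := SimpleGraph.incidenceSet_inter_incidenceSet_subset F huv
      (show e ∈ F.incidenceSet u ∩ F.incidenceSet v by simpa using he)
    simpa using this
  have h1 := card_union_add_card_inter (F.incidenceFinset x) (F.incidenceFinset y)
  have h2 := card_union_add_card_inter (F.incidenceFinset x ∪ F.incidenceFinset y)
    (F.incidenceFinset z)
  have h3 : #((F.incidenceFinset x ∪ F.incidenceFinset y) ∩ F.incidenceFinset z) ≤ 2 := by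
    rw [union_inter_distrib_right]
    exact (card_union_le _ _).trans (add_le_add (inter x z hxz) (inter y z hyz))
  have h4 := inter x y hxy
  have h5 : #(F.incidenceFinset x ∪ F.incidenceFinset y ∪ F.incidenceFinset z) ≤ #F.edgeFinset :=
    card_le_card (union_subset (union_subset (F.incidenceFinset_subset x)
      (F.incidenceFinset_subset y)) (F.incidenceFinset_subset z))
  simp only [SimpleGraph.card_incidenceFinset_eq_degree] at h1 h2
  omega

/-- the counting contradiction when nonnegative vertices are at least half -/
lemma ab_count {a : V → V → ℤ} (h : ABCol a) (hb : ∑ i, ∑ j, a i j = 0)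
    (hpos : ∀ x, 0 ≤ ∑ j, a x j → (Fintype.card V : ℤ) ≤ 2 * ∑ j, a x j) [Nonempty V]
    (hmaj : #{x | ¬ 0 ≤ ∑ j, a x j} ≤ #{x | 0 ≤ ∑ j, a x j}) : False := by
  set P : Finset V := {x | 0 ≤ ∑ j, a x j} with hP
  set Q : Finset V := {x | ¬ 0 ≤ ∑ j, a x j} with hQ
  have hPQ : ∀ g : V → ℤ, ∑ x, g x = ∑ x ∈ P, g x + ∑ x ∈ Q, g x := fun g =>
    (sum_filter_add_sum_filter_not univ _ g).symm
  have hcard : (#P : ℤ) + #Q = Fintype.card V := by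
    have := hPQ (fun _ => 1)
    simp only [sum_const, nsmul_eq_mul, mul_one, card_univ] at this
    linarith
  have h1 : (#P : ℤ) * Fintype.card V ≤ 2 * ∑ x ∈ P, ∑ j, a x j := by
    rw [mul_sum, ← nsmul_eq_mul]
    exact card_nsmul_le_sum _ _ _ (fun x hx => hpos x (mem_filter.1 hx).2)
  have h2 : ∑ x ∈ P, ∑ j, a x j = ∑ x ∈ P, ∑ j ∈ P, a x j + ∑ x ∈ P, ∑ j ∈ Q, a x j := by
    rw [← sum_add_distrib]; exact sum_congr rfl fun x _ => hPQ _
  have h3 : ∑ x ∈ Q, ∑ j, a x j = ∑ x ∈ P, ∑ j ∈ Q, a x j + ∑ x ∈ Q, ∑ j ∈ Q, a x j := by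
    rw [sum_congr rfl (fun x _ => hPQ (a x)), sum_add_distrib, sum_comm (s := Q) (t := P)]
    congr 1
    exact sum_congr rfl fun x _ => sum_congr rfl fun j _ => h.symm _ _
  have h4 : ∑ x ∈ P, ∑ j ∈ P, a x j ≤ #P * (#P - 1) := by
    rw [← nsmul_eq_mul]
    refine sum_le_card_nsmul _ _ _ fun x hx => ?_
    rw [← add_sum_erase _ _ hx, h.diag, zero_add, ← Nat.cast_pred (card_pos.2 ⟨x, hx⟩),
      ← card_erase_of_mem hx]
    have := sum_le_card_nsmul (P.erase x) (a x) 1 (fun j _ => h.le x j)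
    simpa using this
  have h5 : -((#Q : ℤ) * (#Q - 1)) ≤ ∑ x ∈ Q, ∑ j ∈ Q, a x j := by
    rw [← mul_neg, ← nsmul_eq_mul]
    refine card_nsmul_le_sum _ _ _ fun x hx => ?_
    rw [← add_sum_erase _ _ hx, h.diag, zero_add, ← Nat.cast_pred (card_pos.2 ⟨x, hx⟩),
      ← card_erase_of_mem hx]
    have := card_nsmul_le_sum (Q.erase x) (a x) (-1) (fun j _ => h.ge x j)
    simpa using this
  rw [hPQ] at hb
  have h6 : (#Q : ℤ) ≤ #P := by exact_mod_cast hmaj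
  have h7 : (0:ℤ) < Fintype.card V := by exact_mod_cast Fintype.card_pos
  have h8 : (0:ℤ) ≤ #Q := Int.natCast_nonneg _
  rw [← hcard] at h1 h7
  nlinarith

lemma ab_allpos (F : SimpleGraph V) [DecidableRel F.Adj] {a : V → V → ℤ} (h : ABCol a)
    (hb : ∑ i, ∑ j, a i j = 0) (hm : #F.edgeFinset + 1 ≤ Fintype.card V)
    (w y l : V) (hw : Fintype.card V ≤ 2 * F.degree w) (h3 : 3 ≤ Fintype.card V)
    (hlw : l ≠ w) (hly : l ≠ y) (hl : F.degree l ≤ 1)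
    (hd : ∀ v, v ≠ w → v ≠ y → 2 * F.degree v ≤ F.degree w + 2)
    (hno : ∀ σ, (F.degree w + 18 : ℤ) < abW F a σ ∨ abW F a σ < -(F.degree w + 18 : ℤ))
    (x : V) (hs : 0 ≤ ∑ j, a x j) : (Fintype.card V : ℤ) ≤ 2 * ∑ j, a x j := by
  have hall : ∀ σ : Equiv.Perm V, σ w = x → (F.degree w + 18 : ℤ) ≤ abW F a σ := by
    intro σ₀ hσ₀
    obtain ⟨σ, h1, h2, h4⟩ := ab_greedy F h hm w y hw σ₀ (by rw [hσ₀]; exact hs)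
    have hσ : (F.degree w + 18 : ℤ) < abW F a σ := by
      rcases hno σ with h5 | h5
      · exact h5
      · omega
    refine (ab_propagate F h _ hno ((univ.erase w).erase y) l hl (by simp [hlw, hly]) ?_ _ σ σ₀ rfl
      ?_ hσ).le
    · intro v hv
      simp only [mem_erase, mem_univ, and_true] at hv
      have := hd v hv.2 hv.1
      omega
    · intro v hv
      simp only [mem_erase, mem_univ, and_true] at hv
      by_cases hvy : v = y
      · rw [hvy, h2]
      · have : v = w := by tauto
        rw [this, h1]
  have := ab_mean F h hb w x hs h3 _ hall
  by_contra hcon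
  push Not at hcon
  have hc : 2 * ∑ j, a x j ≤ (Fintype.card V : ℤ) - 1 := by omega
  have hd0 : (0:ℤ) ≤ F.degree w := by positivity
  have h3' : (3:ℤ) ≤ Fintype.card V := by exact_mod_cast h3
  nlinarith [mul_le_mul_of_nonneg_left hc hd0]

lemma ab_main (F : SimpleGraph V) [DecidableRel F.Adj] [Nonempty V] {a : V → V → ℤ} (h : ABCol a)
    (hb : ∑ i, ∑ j, a i j = 0) (hF : F.IsAcyclic)
    (hdeg : Fintype.card V ≤ 2 * F.maxDegree ∨ F.maxDegree ≤ 15) :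
    ∃ σ, |abW F a σ| ≤ F.maxDegree + 18 := by
  by_contra hcon
  push Not at hcon
  have hno : ∀ σ, (F.maxDegree + 18 : ℤ) < abW F a σ ∨ abW F a σ < -(F.maxDegree + 18 : ℤ) := by
    intro σ
    rcases lt_abs.1 (hcon σ) with h | h
    · exact Or.inl h
    · right; linarith
  have hm := ab_edges F hF
  have hds := F.sum_degrees_eq_twice_card_edges
  by_cases h15 : F.maxDegree ≤ 15
  · obtain ⟨l, hl⟩ : ∃ l, F.degree l ≤ 1 := by
      by_contra hc
      push Not at hc
      have := card_nsmul_le_sum univ (fun v => F.degree v) 2 (fun v _ => hc v)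
      simp only [smul_eq_mul, card_univ] at this
      omega
    have hz := abW_mean_zero F h hb
    have hp := ab_propagate F h _ hno univ l hl (by simp) (by
      intro v _
      have := F.degree_le_maxDegree v
      omega)
    by_cases hex : ∃ σ, (F.maxDegree + 18 : ℤ) < abW F a σ
    · obtain ⟨σ, hσ⟩ := hex
      have : 0 < ∑ σ, abW F a σ := sum_pos (fun τ _ => by
        have := hp _ σ τ rfl (by simp) hσ
        omega) ⟨1, by simp⟩
      omega
    · push Not at hex
      have : ∑ σ, abW F a σ < 0 := sum_neg (fun τ _ => by
        have := hex τ
        have := hno τ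
        omega) ⟨1, by simp⟩
      omega
  · push Not at h15
    have hw := hdeg.resolve_right (by omega)
    obtain ⟨w, hwd⟩ := F.exists_maximal_degree_vertex
    have hlt := F.degree_lt_card_verts w
    rw [hwd] at hno hw h15
    obtain ⟨y, hy, hymax⟩ := exists_max_image (univ.erase w) (fun v => F.degree v) (by
      rw [← card_pos, card_erase_of_mem (mem_univ _), card_univ]; omega)
    have hyw : y ≠ w := ne_of_mem_erase hy
    have hd : ∀ v, v ≠ w → v ≠ y → 2 * F.degree v ≤ F.degree w + 2 := by
      intro v hv1 hv2
      have h1 := hymax v (by simp [hv1])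
      have h2 := ab_three F w y v hyw.symm hv1.symm hv2.symm
      omega
    obtain ⟨l, hlw, hly, hl⟩ : ∃ l, l ≠ w ∧ l ≠ y ∧ F.degree l ≤ 1 := by
      by_contra hc
      push Not at hc
      have := card_nsmul_le_sum ((univ.erase w).erase y) (fun v => F.degree v) 2 (fun v hv => by
        simp only [mem_erase, mem_univ, and_true] at hv
        exact hc v hv.2 hv.1)
      rw [card_erase_of_mem hy, card_erase_of_mem (mem_univ _), card_univ] at this
      rw [← add_sum_erase _ _ (mem_univ w), ← add_sum_erase _ _ hy] at hds
      simp only [smul_eq_mul] at this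
      omega
    have h3 : 3 ≤ Fintype.card V := by omega
    have hA := ab_allpos F h hb hm w y l hw h3 hlw hly hl hd hno
    have hb' : ∑ i, ∑ j, (fun i j => - a i j) i j = 0 := by simp [hb]
    have hB := ab_allpos F h.neg hb' hm w y l hw h3 hlw hly hl hd (by
      intro σ
      rw [abW_neg]
      rcases hno σ with h | h
      · right; linarith
      · left; linarith)
    by_cases hmaj : #{x | ¬ 0 ≤ ∑ j, a x j} ≤ #{x | 0 ≤ ∑ j, a x j}
    · exact ab_count h hb hA hmaj
    · refine ab_count h.neg hb' hB ?_
      have e1 : #{x | ¬ 0 ≤ ∑ j, - a x j} ≤ #{x | 0 ≤ ∑ j, a x j} := card_le_card (by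
        intro x hx
        simp at hx ⊢
        omega)
      have e2 : #{x | ¬ 0 ≤ ∑ j, a x j} ≤ #{x | 0 ≤ ∑ j, - a x j} := card_le_card (by
        intro x hx
        simp at hx ⊢
        omega)
      exact e1.trans ((lt_of_not_ge hmaj).le.trans e2)

end ABSF

/-- If `c` is a balanced `±1`-colouring of the edges of `K_n` and `F`
is a forest on `n` vertices with maximum degree `Δ` satisfying `Δ ≥ n/2` or `Δ ≤ 15`,
then there is a copy `F'` of `F` in `K_n` with `|c(F')| ≤ Δ/2 + 9`. -/
theorem almost_balanced_spanning_forest_extreme_degree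
    (n : ℕ) (F : SimpleGraph (Fin n)) [DecidableRel F.Adj]
    (hF : F.IsAcyclic) (Δ : ℕ) (hΔ : F.maxDegree = Δ)
    (hdeg : (n : ℝ) / 2 ≤ (Δ : ℝ) ∨ Δ ≤ 15)
    (c : Sym2 (Fin n) → ℤ)
    (hc : ∀ e ∈ (⊤ : SimpleGraph (Fin n)).edgeFinset, c e = 1 ∨ c e = -1)
    (hbal : ∑ e ∈ (⊤ : SimpleGraph (Fin n)).edgeFinset, c e = 0) :
    ∃ f : Fin n ↪ Fin n,
      |(∑ e ∈ F.edgeFinset, c (Sym2.map (⇑f) e) : ℝ)| ≤ (Δ : ℝ) / 2 + 9 := by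
  rcases Nat.eq_zero_or_pos n with hn | hn
  · subst hn
    refine ⟨Function.Embedding.refl _, ?_⟩
    have : F.edgeFinset = ∅ := by
      ext e
      induction e with
      | _ x y => exact x.elim0
    rw [this]
    simp only [sum_empty, abs_zero]
    positivity
  have : Nonempty (Fin n) := ⟨⟨0, hn⟩⟩
  subst hΔ
  set a : Fin n → Fin n → ℤ := fun i j => if (⊤ : SimpleGraph (Fin n)).Adj i j then c s(i, j) else 0
    with ha
  have hcol : ABCol a := by
    refine ⟨fun i j => ?_, fun i => by simp [ha], fun i j hij => ?_⟩
    · simp only [ha, SimpleGraph.adj_comm _ i j, Sym2.eq_swap (a := i)]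
    · simp only [ha, SimpleGraph.top_adj, if_pos hij]
      exact hc _ (by simpa using hij)
  have hb : ∑ i, ∑ j, a i j = 0 := by
    rw [ha, ab_sum_edge, hbal]; rfl
  obtain ⟨σ, hσ⟩ := ab_main F hcol hb hF (by
    rcases hdeg with h | h
    · left
      rw [Fintype.card_fin]
      have : (n : ℝ) ≤ 2 * F.maxDegree := by linarith
      exact_mod_cast this
    · exact Or.inr h)
  refine ⟨σ.toEmbedding, ?_⟩
  have e : abW F a σ = 2 * ∑ e ∈ F.edgeFinset, c (Sym2.map σ e) := by
    rw [← ab_sum_edge F (fun e => c (Sym2.map σ e))]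
    unfold abW
    refine sum_congr rfl fun i _ => sum_congr rfl fun j _ => ?_
    by_cases hij : F.Adj i j
    · have : σ i ≠ σ j := fun hh => hij.ne (σ.injective hh)
      simp [hij, ha, this]
    · simp [hij]
  rw [e] at hσ
  have hσ' : |(2 * ∑ e ∈ F.edgeFinset, c (Sym2.map σ e) : ℝ)| ≤ (F.maxDegree : ℝ) + 18 := by
    exact_mod_cast hσ
  rw [abs_mul, abs_two] at hσ'
  push_cast at hσ'
  have hfin : |(∑ e ∈ F.edgeFinset, c (Sym2.map (⇑σ) e) : ℝ)| ≤ (F.maxDegree : ℝ) / 2 + 9 := by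
    linarith
  exact hfin
end

section
/- Let n be an integer, let F be a forest on n vertices with maximum degree Δ satisfying 15 < Δ < n/2, and let c : E(K_n) → {−1, +1} be a balanced colouring of the edges of K_n. Then there exists a copy F' of F in K_n such that |c(F')| ≤ (Δ − n/4 + 3)/2 + √( (Δ − n/4 + 1)²/4 + 4n ). -/
namespace ABSF

open Finset

lemma acyclic_card {V : Type*} [Fintype V] [Nonempty V] (F : SimpleGraph V)
    [DecidableRel F.Adj] [DecidableEq V] (hF : F.IsAcyclic) :
    F.edgeFinset.card + 1 ≤ Fintype.card V := by
  classical
  obtain ⟨T, hT2, hT1, hT3⟩ :=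
    (SimpleGraph.connected_top (V := V)).exists_isTree_le_of_le_of_isAcyclic (le_top (a := F)) hF
  have h := hT3.card_edgeFinset
  have h2 : F.edgeFinset ⊆ T.edgeFinset := SimpleGraph.edgeFinset_mono hT2
  have := Finset.card_le_card h2
  omega

lemma acyclic_low {V : Type*} [Fintype V] [DecidableEq V] (F : SimpleGraph V)
    [DecidableRel F.Adj] (hF : F.IsAcyclic) (U : Finset V) (hU : U.Nonempty) :
    ∃ u ∈ U, (U.filter (fun b => F.Adj u b)).card ≤ 1 := by
  classical
  have hne : Nonempty (U : Set V) := by simpa using hU.to_subtype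
  have h1 := acyclic_card (F.induce (U : Set V)) (hF.induce _)
  have h2 := (F.induce (U : Set V)).sum_degrees_eq_twice_card_edges
  by_contra hcon
  push Not at hcon
  have h3 : ∀ x : (U : Set V), 2 ≤ (F.induce (U : Set V)).degree x := by
    intro x
    have hx := hcon x.1 (by simpa using x.2)
    rw [← SimpleGraph.card_neighborFinset_eq_degree]
    refine le_trans hx ?_
    rw [← Finset.card_map (Function.Embedding.subtype _)]
    apply Finset.card_le_card
    intro b hb
    simp only [mem_filter] at hb
    simp only [mem_map, SimpleGraph.mem_neighborFinset]
    exact ⟨⟨b, by simpa using hb.1⟩, by simpa using hb.2, rfl⟩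
  have h4 := Finset.sum_le_sum (s := univ) (fun x _ => h3 x)
  simp only [sum_const, card_univ, smul_eq_mul] at h4
  omega

lemma perm_mem {V : Type*} [Fintype V] [DecidableEq V] (G : Subgroup (Equiv.Perm V))
    (v : V) (U : Finset V) (h : ∀ a ∉ U, Equiv.swap a v ∈ G) :
    ∀ (k : ℕ) (g : Equiv.Perm V), g.support.card = k → (∀ a ∈ U, g a = a) → g ∈ G := by
  intro k
  induction k using Nat.strong_induction_on with
  | _ k ih =>
    intro g hk hg
    by_cases h1 : g = 1
    · rw [h1]; exact G.one_mem
    obtain ⟨a, ha⟩ : ∃ a, g a ≠ a := by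
      by_contra hh; push Not at hh; exact h1 (Equiv.ext hh)
    have haU : a ∉ U := fun hh => ha (hg a hh)
    have hgaU : g a ∉ U := fun hh => ha (g.injective (hg _ hh))
    have hs : Equiv.swap a (g a) ∈ G :=
      SubmonoidClass.swap_mem_trans G (h a haU) (by rw [Equiv.swap_comm]; exact h _ hgaU)
    have h2 := Equiv.Perm.card_support_swap_mul ha
    have h3 := ih _ (by rw [← hk]; exact h2) (Equiv.swap a (g a) * g) rfl (by
      intro b hb
      have : g b = b := hg b hb
      rw [Equiv.Perm.mul_apply, this, Equiv.swap_apply_of_ne_of_ne]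
      · rintro rfl; exact haU hb
      · rintro rfl; exact hgaU hb)
    have := G.mul_mem (G.inv_mem hs) h3
    simpa using this

/-- value of a copy -/
def fval {n : ℕ} (F : SimpleGraph (Fin n)) [DecidableRel F.Adj] (c : Sym2 (Fin n) → ℤ)
    (π : Equiv.Perm (Fin n)) : ℤ := ∑ e ∈ F.edgeFinset, c (Sym2.map π e)

lemma two_sum {n : ℕ} (F : SimpleGraph (Fin n)) [DecidableRel F.Adj] (p : Sym2 (Fin n) → ℤ) :
    2 * ∑ e ∈ F.edgeFinset, p e = ∑ a, ∑ b, if F.Adj a b then p s(a, b) else 0 := by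
  classical
  have h1 : ∑ d : F.Dart, p d.edge = 2 * ∑ e ∈ F.edgeFinset, p e := by
    rw [← Finset.sum_fiberwise_of_maps_to (s := univ) (t := F.edgeFinset) (g := fun d : F.Dart => d.edge)
      (by intro d _; simp [d.edge_mem]), Finset.mul_sum]
    apply Finset.sum_congr rfl
    intro e he
    rw [Finset.sum_congr rfl (g := fun _ => p e) (by intro d hd; rw [(mem_filter.1 hd).2])]
    rw [Finset.sum_const, F.dart_edge_fiber_card e (by simpa using he)]
    simp
  rw [← h1, ← Finset.sum_product', ← Finset.sum_filter]
  apply Finset.sum_bij (fun (d : F.Dart) _ => d.toProd)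
  · intro d _; simp [d.adj]
  · intro d _ d' _ h; exact SimpleGraph.Dart.ext _ _ h
  · intro x hx
    exact ⟨⟨x, by simpa using hx⟩, mem_univ _, rfl⟩
  · intro d _; rfl

lemma sum_split {V : Type*} [Fintype V] [DecidableEq V] (g : V → V → ℤ)
    (hs : ∀ a b, g a b = g b a) (h0 : ∀ a, g a a = 0) (u v : V) (huv : u ≠ v) :
    ∑ a, ∑ b, g a b = (∑ a ∈ univ \ {u, v}, ∑ b ∈ univ \ {u, v}, g a b)
      + 2 * (∑ b ∈ univ \ {u, v}, (g u b + g v b)) + 2 * g u v := by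
  have key : ∀ f : V → ℤ, ∑ a, f a = ∑ a ∈ univ \ {u, v}, f a + (f u + f v) := by
    intro f
    rw [← Finset.sum_sdiff (subset_univ {u, v}), Finset.sum_pair huv]
  rw [key]
  simp only [key, Finset.sum_add_distrib, h0]
  rw [hs v u, Finset.sum_congr rfl (fun a _ => hs a u), Finset.sum_congr rfl (fun a _ => hs a v)]
  ring

lemma fval_swap {n : ℕ} (F : SimpleGraph (Fin n)) [DecidableRel F.Adj] (c : Sym2 (Fin n) → ℤ)
    (π : Equiv.Perm (Fin n)) (u v : Fin n) (huv : u ≠ v) :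
    fval F c (π * Equiv.swap u v) - fval F c π =
      ∑ b ∈ univ \ {u, v}, ((if F.Adj u b then 1 else 0) - (if F.Adj v b then 1 else 0)) *
        (c s(π v, π b) - c s(π u, π b)) := by
  have h : ∀ ρ : Equiv.Perm (Fin n), 2 * fval F c ρ =
      (∑ a ∈ univ \ {u, v}, ∑ b ∈ univ \ {u, v}, if F.Adj a b then c s(ρ a, ρ b) else 0)
      + 2 * (∑ b ∈ univ \ {u, v}, ((if F.Adj u b then c s(ρ u, ρ b) else 0)
        + (if F.Adj v b then c s(ρ v, ρ b) else 0)))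
      + 2 * (if F.Adj u v then c s(ρ u, ρ v) else 0) := by
    intro ρ
    rw [fval, two_sum F (fun e => c (Sym2.map ρ e))]
    simp only [Sym2.map_mk]
    rw [sum_split (fun a b => if F.Adj a b then c s(ρ a, ρ b) else 0) _ _ u v huv]
    · intro a b; simp only [F.adj_comm a b, Sym2.eq_swap (a := ρ a)]
    · intro a; simp
  have h1 := h π
  have h2 := h (π * Equiv.swap u v)
  have e : ∀ b ∈ univ \ {u, v}, (π * Equiv.swap u v) b = π b := by
    intro b hb
    simp only [mem_sdiff, mem_univ, mem_insert, mem_singleton, true_and, not_or] at hb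
    rw [Equiv.Perm.mul_apply, Equiv.swap_apply_of_ne_of_ne hb.1 hb.2]
  have e1 : (∑ a ∈ univ \ {u, v}, ∑ b ∈ univ \ {u, v}, if F.Adj a b then
      c s((π * Equiv.swap u v) a, (π * Equiv.swap u v) b) else 0) =
      ∑ a ∈ univ \ {u, v}, ∑ b ∈ univ \ {u, v}, if F.Adj a b then c s(π a, π b) else 0 :=
    Finset.sum_congr rfl (fun a ha => Finset.sum_congr rfl (fun b hb => by rw [e a ha, e b hb]))
  have e2 : (∑ b ∈ univ \ {u, v},
        ((if F.Adj u b then c s((π * Equiv.swap u v) u, (π * Equiv.swap u v) b) else 0)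
        + (if F.Adj v b then c s((π * Equiv.swap u v) v, (π * Equiv.swap u v) b) else 0))) =
      ∑ b ∈ univ \ {u, v}, ((if F.Adj u b then c s(π v, π b) else 0)
        + (if F.Adj v b then c s(π u, π b) else 0)) :=
    Finset.sum_congr rfl (fun b hb => by
      rw [e b hb]; simp only [Equiv.Perm.mul_apply, Equiv.swap_apply_left, Equiv.swap_apply_right])
  rw [e1, e2] at h2
  simp only [Equiv.Perm.mul_apply, Equiv.swap_apply_left, Equiv.swap_apply_right] at h2
  rw [Sym2.eq_swap (a := π v) (b := π u)] at h2
  have h3 : ∑ b ∈ univ \ {u, v}, ((if F.Adj u b then 1 else 0) - (if F.Adj v b then 1 else 0)) *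
        (c s(π v, π b) - c s(π u, π b)) = (∑ b ∈ univ \ {u, v}, ((if F.Adj u b then c s(π v, π b) else 0)
        + (if F.Adj v b then c s(π u, π b) else 0))) - (∑ b ∈ univ \ {u, v}, ((if F.Adj u b then c s(π u, π b) else 0)
        + (if F.Adj v b then c s(π v, π b) else 0))) := by
    rw [← Finset.sum_sub_distrib]
    apply Finset.sum_congr rfl
    intro b _
    split_ifs <;> ring
  rw [h3]
  linarith

lemma fval_avg {n : ℕ} (F : SimpleGraph (Fin n)) [DecidableRel F.Adj] (c : Sym2 (Fin n) → ℤ)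
    (hbal : ∑ e ∈ (⊤ : SimpleGraph (Fin n)).edgeFinset, c e = 0) :
    ∑ π : Equiv.Perm (Fin n), fval F c π = 0 := by
  classical
  have hconst : ∀ e ∈ (⊤ : SimpleGraph (Fin n)).edgeFinset, ∀ e' ∈ (⊤ : SimpleGraph (Fin n)).edgeFinset,
      ∑ π : Equiv.Perm (Fin n), c (Sym2.map π e) = ∑ π : Equiv.Perm (Fin n), c (Sym2.map π e') := by
    intro e he e' he'
    induction e using Sym2.ind with | _ a b =>
    induction e' using Sym2.ind with | _ a' b' =>
    have hab : a ≠ b := by simpa using he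
    have hab' : a' ≠ b' := by simpa using he'
    obtain ⟨σ, h1, h2⟩ : ∃ σ : Equiv.Perm (Fin n), σ a' = a ∧ σ b' = b := by
      refine ⟨Equiv.swap (Equiv.swap a' a b') b * Equiv.swap a' a, ?_, ?_⟩
      · rw [Equiv.Perm.mul_apply, Equiv.swap_apply_left, Equiv.swap_apply_of_ne_of_ne _ hab]
        intro hh
        apply hab'
        apply (Equiv.swap a' a).injective
        rw [Equiv.swap_apply_left]; exact hh
      · rw [Equiv.Perm.mul_apply, Equiv.swap_apply_left]
    rw [← Equiv.sum_comp (Equiv.mulRight σ) (fun π => c (Sym2.map π s(a', b')))]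
    simp [h1, h2]
  have htop : ∀ π : Equiv.Perm (Fin n),
      ∑ e ∈ (⊤ : SimpleGraph (Fin n)).edgeFinset, c (Sym2.map π e) = 0 := by
    intro π
    rw [← hbal]
    apply Finset.sum_bij (fun e _ => Sym2.map π e)
    · intro e he
      induction e using Sym2.ind with | _ a b =>
      simpa using he
    · intro a _ b _ h; exact Sym2.map.injective π.injective h
    · intro e he
      refine ⟨Sym2.map π.symm e, ?_, ?_⟩
      · induction e using Sym2.ind with | _ a b =>
        simpa using he
      · simp [Sym2.map_map]
    · intro e _; rfl
  unfold fval
  rw [Finset.sum_comm]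
  apply Finset.sum_eq_zero
  intro e he
  have he' : e ∈ (⊤ : SimpleGraph (Fin n)).edgeFinset :=
    SimpleGraph.edgeFinset_mono le_top he
  have h1 : ∑ e' ∈ (⊤ : SimpleGraph (Fin n)).edgeFinset, ∑ π : Equiv.Perm (Fin n), c (Sym2.map π e') = 0 := by
    rw [Finset.sum_comm]; exact Finset.sum_eq_zero (fun π _ => htop π)
  rw [Finset.sum_congr rfl (fun e' h' => hconst e' h' e he'), Finset.sum_const, smul_eq_zero] at h1
  rcases h1 with h1 | h1
  · rw [Finset.card_eq_zero] at h1; rw [h1] at he'; simp at he'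
  · exact h1

lemma sum_erase_erase {V : Type*} [DecidableEq V] (X : Finset V) (g : V → ℝ) :
    ∑ x ∈ X, ∑ w ∈ X.erase x, g w = ((X.card : ℝ) - 1) * ∑ w ∈ X, g w := by
  rw [Finset.sum_congr rfl (g := fun x => (∑ w ∈ X, g w) - g x)]
  · rw [Finset.sum_sub_distrib, Finset.sum_const, nsmul_eq_mul]; ring
  · intro x hx
    rw [← Finset.add_sum_erase X g hx]; ring

lemma neg_total {n : ℕ} (c : Sym2 (Fin n) → ℤ)
    (hc : ∀ a b : Fin n, a ≠ b → c s(a, b) = 1 ∨ c s(a, b) = -1)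
    (hbal : ∑ e ∈ (⊤ : SimpleGraph (Fin n)).edgeFinset, c e = 0) :
    2 * ∑ a : Fin n, ((univ.filter (fun w => w ≠ a ∧ c s(a, w) = -1)).card : ℤ) = n * (n - 1) := by
  have h := two_sum (⊤ : SimpleGraph (Fin n)) c
  rw [hbal] at h
  have h2 : ∀ a : Fin n, (∑ b, if (⊤ : SimpleGraph (Fin n)).Adj a b then c s(a, b) else 0) =
      ((n : ℤ) - 1) - 2 * ((univ.filter (fun w => w ≠ a ∧ c s(a, w) = -1)).card : ℤ) := by
    intro a
    have h3 : ∀ b, (if (⊤ : SimpleGraph (Fin n)).Adj a b then c s(a, b) else 0) =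
        (if b = a then 0 else 1) - 2 * (if b ≠ a ∧ c s(a, b) = -1 then 1 else 0) := by
      intro b
      by_cases hab : b = a
      · subst hab; simp
      · have : (⊤ : SimpleGraph (Fin n)).Adj a b := by simpa using fun h => hab h.symm
        rw [if_pos this, if_neg hab]
        rcases hc a b (fun h => hab h.symm) with h | h <;> simp [h, hab]
    rw [Finset.sum_congr rfl (fun b _ => h3 b), Finset.sum_sub_distrib, ← Finset.mul_sum]
    have h5 : ∑ b : Fin n, (if b = a then (0 : ℤ) else 1) = n - 1 := by
      have : ∑ b : Fin n, (if b = a then (0 : ℤ) else 1) = ∑ b : Fin n, (1 - if b = a then (1 : ℤ) else 0) :=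
        Finset.sum_congr rfl (fun b _ => by split_ifs <;> rfl)
      rw [this, Finset.sum_sub_distrib]; simp
    rw [h5]
    simp
  rw [Finset.sum_congr rfl (fun a _ => h2 a), Finset.sum_sub_distrib, ← Finset.mul_sum] at h
  simp only [sum_const, card_univ, Fintype.card_fin, nsmul_eq_mul] at h
  linarith

lemma count_bound {n : ℕ} (c : Sym2 (Fin n) → ℤ)
    (hc : ∀ a b : Fin n, a ≠ b → c s(a, b) = 1 ∨ c s(a, b) = -1)
    (hbal : ∑ e ∈ (⊤ : SimpleGraph (Fin n)).edgeFinset, c e = 0)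
    (X Y T : Finset (Fin n)) (hX : X.Nonempty) (hY : Y.Nonempty)
    (hXY : Disjoint X Y) (hcov : ∀ a, a ∈ X ∨ a ∈ Y ∨ a ∈ T)
    (μ : ℝ) (hm : ∀ x ∈ X, ∀ y ∈ Y,
      ((((X ∪ Y) \ {x, y}).filter (fun w => ¬ (c s(x, w) = -1 ∧ c s(y, w) = 1))).card : ℝ) ≤ μ)
    (hle : X.card ≤ Y.card) :
    (n : ℝ) * (n - 1) / 2 ≤ 2 * n * (μ + 1 + T.card) := by
  classical
  have hne : ∀ x ∈ X, ∀ y ∈ Y, x ≠ y := fun x hx y hy => Finset.disjoint_iff_ne.1 hXY x hx y hy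
  let N : Fin n → Fin n → ℝ := fun a b => if c s(a, b) = -1 then 1 else 0
  have hN0 : ∀ a b, 0 ≤ N a b := fun a b => by simp only [N]; split_ifs <;> norm_num
  have hN1 : ∀ a b, N a b ≤ 1 := fun a b => by simp only [N]; split_ifs <;> norm_num
  have hα : (1 : ℝ) ≤ X.card := by exact_mod_cast hX.card_pos
  have hβ : (1 : ℝ) ≤ Y.card := by exact_mod_cast hY.card_pos
  have hle' : (X.card : ℝ) ≤ Y.card := by exact_mod_cast hle
  have step : ∀ x ∈ X, ∀ y ∈ Y,
      ∑ w ∈ X.erase x, N w y + ∑ w ∈ Y.erase y, (1 - N x w) ≤ μ := by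
    intro x hx y hy
    refine le_trans ?_ (hm x hx y hy)
    have e1 : ∑ w ∈ X.erase x, N w y = (((X.erase x).filter (fun w => c s(w, y) = -1)).card : ℝ) := by
      simp only [N]; rw [Finset.sum_boole]
    have e2 : ∑ w ∈ Y.erase y, (1 - N x w) = (((Y.erase y).filter (fun w => ¬ c s(x, w) = -1)).card : ℝ) := by
      rw [← Finset.sum_boole]
      apply Finset.sum_congr rfl
      intro w _
      simp only [N]; split_ifs <;> simp_all
    rw [e1, e2, ← Nat.cast_add, ← Finset.card_union_of_disjoint]
    · norm_cast
      apply Finset.card_le_card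
      intro w hw
      simp only [mem_union, mem_filter, mem_erase, mem_sdiff, mem_insert, mem_singleton] at hw ⊢
      rcases hw with ⟨⟨h1, h2⟩, h3⟩ | ⟨⟨h1, h2⟩, h3⟩
      · refine ⟨⟨Or.inl h2, ?_⟩, ?_⟩
        · rintro (h | h)
          · exact h1 h
          · exact hne w h2 y hy h
        · rintro ⟨-, h⟩
          rw [Sym2.eq_swap, h] at h3
          exact absurd h3 (by decide)
      · refine ⟨⟨Or.inr h2, ?_⟩, fun h => h3 h.1⟩
        rintro (h | h)
        · exact hne x hx w h2 h.symm
        · exact h1 h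
    · rw [Finset.disjoint_left]
      intro w h1 h2
      simp only [mem_filter, mem_erase] at h1 h2
      exact hne w h1.1.2 w h2.1.2 rfl
  have hμ : (X.card : ℝ) - 1 ≤ μ := by
    have h1 : ∑ x ∈ X, ∑ y ∈ Y, (∑ w ∈ X.erase x, N w y + ∑ w ∈ Y.erase y, (1 - N x w)) ≤
        ∑ x ∈ X, ∑ y ∈ Y, μ :=
      Finset.sum_le_sum fun x hx => Finset.sum_le_sum fun y hy => step x hx y hy
    simp only [Finset.sum_add_distrib] at h1
    rw [Finset.sum_comm] at h1
    rw [Finset.sum_congr rfl (fun y _ => sum_erase_erase X (fun w => N w y))] at h1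
    rw [Finset.sum_congr (g := fun x => ((Y.card : ℝ) - 1) * ∑ w ∈ Y, (1 - N x w)) (s₁ := X) rfl
      (fun x _ => sum_erase_erase Y (fun w => 1 - N x w))] at h1
    rw [← Finset.mul_sum, ← Finset.mul_sum, Finset.sum_comm (s := Y)] at h1
    simp only [Finset.sum_const, nsmul_eq_mul] at h1
    have h2 : ∑ x ∈ X, ∑ w ∈ Y, (1 - N x w) = X.card * Y.card - ∑ x ∈ X, ∑ w ∈ Y, N x w := by
      simp only [Finset.sum_sub_distrib, Finset.sum_const, nsmul_eq_mul, mul_one]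
    have h3 : 0 ≤ ∑ x ∈ X, ∑ w ∈ Y, (1 - N x w) :=
      Finset.sum_nonneg fun x _ => Finset.sum_nonneg fun w _ => by linarith [hN1 x w]
    have h4 : ((X.card : ℝ) - 1) * ∑ x ∈ X, ∑ w ∈ Y, (1 - N x w) ≤
      ((Y.card : ℝ) - 1) * ∑ x ∈ X, ∑ w ∈ Y, (1 - N x w) :=
      mul_le_mul_of_nonneg_right (by linarith) h3
    have h5 : (X.card * Y.card : ℝ) * (X.card - 1) ≤ (X.card * Y.card : ℝ) * μ := by
      have := h2
      nlinarith
    exact le_of_mul_le_mul_left h5 (by positivity)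
  obtain ⟨x0, hx0⟩ := hX
  have hdeg : ∀ y ∈ Y, ((univ.filter (fun w => w ≠ y ∧ c s(y, w) = -1)).card : ℝ) ≤ μ + 1 + T.card := by
    intro y hy
    have h1 := hm x0 hx0 y hy
    have h2 : univ.filter (fun w => w ≠ y ∧ c s(y, w) = -1) ⊆
      (((X ∪ Y) \ {x0, y}).filter (fun w => ¬ (c s(x0, w) = -1 ∧ c s(y, w) = 1))) ∪ {x0} ∪ T := by
      intro w hw
      simp only [mem_union, mem_filter, mem_sdiff, mem_insert, mem_singleton, mem_univ, true_and] at hw ⊢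
      have := hcov w
      have h3 : ¬ (c s(y, w) = 1) := by rw [hw.2]; norm_num
      tauto
    have h3 := (Finset.card_le_card h2).trans ((Finset.card_union_le _ _).trans
      (Nat.add_le_add_right (Finset.card_union_le _ _) _))
    rw [Finset.card_singleton] at h3
    have h4 : ((univ.filter (fun w => w ≠ y ∧ c s(y, w) = -1)).card : ℝ) ≤
      ((((X ∪ Y) \ {x0, y}).filter (fun w => ¬ (c s(x0, w) = -1 ∧ c s(y, w) = 1))).card : ℝ) + 1 + T.card := by
      exact_mod_cast h3
    linarith
  have htot := neg_total c hc hbal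
  have htot' : 2 * ∑ a : Fin n, ((univ.filter (fun w => w ≠ a ∧ c s(a, w) = -1)).card : ℝ) = n * (n - 1) := by
    exact_mod_cast htot
  have hK : 0 ≤ μ + 1 + T.card := by
    have : (0 : ℝ) ≤ T.card := by positivity
    linarith
  rw [← Finset.sum_sdiff (subset_univ Y)] at htot'
  have b1 : ∑ a ∈ Y, ((univ.filter (fun w => w ≠ a ∧ c s(a, w) = -1)).card : ℝ) ≤ n * (μ + 1 + T.card) := by
    refine (Finset.sum_le_sum hdeg).trans ?_
    rw [Finset.sum_const, nsmul_eq_mul]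
    apply mul_le_mul_of_nonneg_right _ hK
    have := Finset.card_le_univ Y
    rw [Fintype.card_fin] at this
    exact_mod_cast this
  have b2 : ∑ a ∈ univ \ Y, ((univ.filter (fun w => w ≠ a ∧ c s(a, w) = -1)).card : ℝ) ≤ (μ + 1 + T.card) * n := by
    refine (Finset.sum_le_sum (g := fun _ => (n : ℝ)) ?_).trans ?_
    · intro a _
      have := Finset.card_le_univ (univ.filter (fun w => w ≠ a ∧ c s(a, w) = -1))
      rw [Fintype.card_fin] at this
      exact_mod_cast this
    · rw [Finset.sum_const, nsmul_eq_mul]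
      apply mul_le_mul_of_nonneg_right _ (by positivity)
      have h1 : univ \ Y ⊆ X ∪ T := by
        intro a ha
        have := hcov a
        simp only [mem_sdiff, mem_univ, true_and, mem_union] at ha ⊢
        tauto
      have h2 := (Finset.card_le_card h1).trans (Finset.card_union_le _ _)
      have h3 : ((univ \ Y).card : ℝ) ≤ X.card + T.card := by exact_mod_cast h2
      linarith
  linarith

lemma count_bound' {n : ℕ} (c : Sym2 (Fin n) → ℤ)
    (hc : ∀ a b : Fin n, a ≠ b → c s(a, b) = 1 ∨ c s(a, b) = -1)
    (hbal : ∑ e ∈ (⊤ : SimpleGraph (Fin n)).edgeFinset, c e = 0)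
    (X Y T : Finset (Fin n)) (hX : X.Nonempty) (hY : Y.Nonempty)
    (hXY : Disjoint X Y) (hcov : ∀ a, a ∈ X ∨ a ∈ Y ∨ a ∈ T)
    (μ : ℝ) (hm : ∀ x ∈ X, ∀ y ∈ Y,
      ((((X ∪ Y) \ {x, y}).filter (fun w => ¬ (c s(x, w) = -1 ∧ c s(y, w) = 1))).card : ℝ) ≤ μ) :
    (n : ℝ) * (n - 1) / 2 ≤ 2 * n * (μ + 1 + T.card) := by
  rcases le_total X.card Y.card with h | h
  · exact count_bound c hc hbal X Y T hX hY hXY hcov μ hm h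
  · refine count_bound (fun e => - c e) ?_ ?_ Y X T hY hX hXY.symm ?_ μ ?_ h
    · intro a b hab
      rcases hc a b hab with h | h <;> simp [h]
    · rw [Finset.sum_neg_distrib, hbal, neg_zero]
    · intro a; have := hcov a; tauto
    · intro y hy x hx
      have := hm x hx y hy
      have e : ((Y ∪ X) \ {y, x}).filter (fun w => ¬ (- c s(y, w) = -1 ∧ - c s(x, w) = 1)) =
          ((X ∪ Y) \ {x, y}).filter (fun w => ¬ (c s(x, w) = -1 ∧ c s(y, w) = 1)) := by
        rw [Finset.union_comm, Finset.pair_comm]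
        apply Finset.filter_congr
        intro w _
        have h1 : - c s(y, w) = -1 ↔ c s(y, w) = 1 := by constructor <;> intro h <;> linarith
        have h2 : - c s(x, w) = 1 ↔ c s(x, w) = -1 := by constructor <;> intro h <;> linarith
        rw [h1, h2]; tauto
      rw [e]; exact this


lemma pair_bound {n : ℕ} (F : SimpleGraph (Fin n)) [DecidableRel F.Adj] (c : Sym2 (Fin n) → ℤ)
    (hc : ∀ a b : Fin n, a ≠ b → c s(a, b) = 1 ∨ c s(a, b) = -1)
    (U : Finset (Fin n)) (u v : Fin n) (hu : u ∈ U) (hv : v ∉ U)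
    (hU1 : (U.filter (fun b => F.Adj u b)).card ≤ 1)
    (π₀ : Equiv.Perm (Fin n)) (S : Finset (Fin n)) (hS : S = univ \ (U.erase u).image π₀)
    (x y : Fin n) (hx : x ∈ S) (hy : y ∈ S) (hxy : x ≠ y) (t : ℝ) (ht : 1 ≤ t)
    (H : ∀ ρ : Equiv.Perm (Fin n), (∀ a ∈ U, a ≠ u → ρ a = π₀ a) → ρ u = x → ρ v = y →
      2 * t < ((∑ b ∈ univ \ {u, v}, (if F.Adj u b then 1 else 0) *
        (c s(y, ρ b) - c s(x, ρ b)) : ℤ) : ℝ)) :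
    (((S \ {x, y}).filter (fun w => ¬ (c s(x, w) = -1 ∧ c s(y, w) = 1))).card : ℝ)
      ≤ F.degree u - t := by
  classical
  have huv : u ≠ v := by rintro rfl; exact hv hu
  set P := S \ {x, y} with hP
  set M := P.filter (fun w => ¬ (c s(x, w) = -1 ∧ c s(y, w) = 1)) with hM
  set N' := univ.filter (fun b => F.Adj u b ∧ b ∉ U ∧ b ≠ v) with hN'
  have hMP : M ⊆ P := filter_subset _ _
  have hcS : S.card + (U.erase u).card = n := by
    rw [hS, ← Finset.card_image_of_injective (U.erase u) π₀.injective,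
      Finset.card_sdiff_add_card_eq_card (subset_univ _), card_univ, Fintype.card_fin]
  have hcP : P.card + 2 = S.card := by
    rw [hP, ← Finset.card_pair hxy]
    apply Finset.card_sdiff_add_card_eq_card
    intro a ha
    simp only [mem_insert, mem_singleton] at ha
    rcases ha with rfl | rfl <;> assumption
  have hcU : (U.erase u).card + 1 = U.card := Finset.card_erase_add_one hu
  have hNP : N'.card ≤ P.card := by
    have h1 : N' ⊆ univ \ (insert v U) := by
      intro b hb
      simp only [hN', mem_filter, mem_univ, true_and, mem_sdiff, mem_insert] at hb ⊢
      tauto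
    have h2 := Finset.card_le_card h1
    have h3 := Finset.card_sdiff_add_card_eq_card (subset_univ (insert v U))
    rw [Finset.card_insert_of_notMem hv, card_univ, Fintype.card_fin] at h3
    omega
  obtain ⟨K, hKP, hKc, hKM⟩ : ∃ K ⊆ P, K.card = N'.card ∧ (K ⊆ M ∨ M ⊆ K) := by
    rcases le_total N'.card M.card with h | h
    · obtain ⟨K, h1, h2⟩ := Finset.exists_subset_card_eq h
      exact ⟨K, h1.trans hMP, h2, Or.inl h1⟩
    · obtain ⟨K, h1, h2, h3⟩ := Finset.exists_subsuperset_card_eq hMP h hNP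
      exact ⟨K, h2, h3, Or.inr h1⟩
  let E : N' ≃ K := Finset.equivOfCardEq hKc.symm
  let f : Fin n → Fin n := fun b => if h : b ∈ N' then (E ⟨b, h⟩ : Fin n) else
    if b = u then x else if b = v then y else π₀ b
  have huN : u ∉ N' := by simp [hN']
  have hvN : v ∉ N' := by simp [hN']
  have hfN : ∀ b (h : b ∈ N'), f b = (E ⟨b, h⟩ : Fin n) := fun b h => by simp only [f, dif_pos h]
  have hfu : f u = x := by simp only [f, dif_neg huN, if_true]
  have hfv : f v = y := by simp only [f, dif_neg hvN, if_neg huv.symm, if_true]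
  have hfU : ∀ b ∈ U, b ≠ u → f b = π₀ b := by
    intro b hb hbu
    have h1 : b ∉ N' := by simp [hN', hb]
    have h2 : b ≠ v := by rintro rfl; exact hv hb
    simp only [f, dif_neg h1, if_neg hbu, if_neg h2]
  have hfK : ∀ b ∈ N', f b ∈ K := fun b h => by rw [hfN b h]; exact (E ⟨b, h⟩).2
  have hKne : ∀ w ∈ K, w ≠ x ∧ w ≠ y ∧ w ∈ S := by
    intro w hw
    have := hKP hw
    simp only [hP, mem_sdiff, mem_insert, mem_singleton, not_or] at this
    tauto
  have hUS : ∀ b ∈ U, b ≠ u → π₀ b ∉ S := by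
    intro b hb hbu
    rw [hS]
    simp only [mem_sdiff, mem_univ, true_and, not_not, mem_image, mem_erase]
    exact ⟨b, ⟨hbu, hb⟩, rfl⟩
  obtain ⟨ρ, hρ⟩ : ∃ ρ : Equiv.Perm (Fin n), ∀ b ∈ insert v (N' ∪ U), ρ b = f b := by
    have hinj : Set.InjOn f (insert v (N' ∪ U) : Finset (Fin n)) := by
      -- classify
      have hcl : ∀ b ∈ insert v (N' ∪ U), b = v ∨ b = u ∨ b ∈ N' ∨ (b ∈ U ∧ b ≠ u) := by
        intro b hb
        simp only [mem_insert, mem_union] at hb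
        tauto
      intro a ha b hb hab
      rcases hcl a ha with rfl | rfl | h1 | ⟨h1, h1'⟩ <;> rcases hcl b hb with rfl | rfl | h2 | ⟨h2, h2'⟩
      · rfl
      · rw [hfu, hfv] at hab; exact absurd hab.symm hxy
      · rw [hfv] at hab; exact absurd hab.symm (hKne _ (hfK b h2)).2.1
      · rw [hfv, hfU b h2 h2'] at hab; rw [hab] at hy; exact absurd hy (hUS b h2 h2')
      · rw [hfu, hfv] at hab; exact absurd hab hxy
      · rfl
      · rw [hfu] at hab; exact absurd hab.symm (hKne _ (hfK b h2)).1
      · rw [hfu, hfU b h2 h2'] at hab; rw [hab] at hx; exact absurd hx (hUS b h2 h2')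
      · rw [hfv] at hab; exact absurd hab (hKne _ (hfK a h1)).2.1
      · rw [hfu] at hab; exact absurd hab (hKne _ (hfK a h1)).1
      · rw [hfN a h1, hfN b h2] at hab
        have := E.injective (Subtype.ext hab)
        exact congrArg Subtype.val this
      · have h3 := (hKne _ (hfK a h1)).2.2
        rw [hab, hfU b h2 h2'] at h3; exact absurd h3 (hUS b h2 h2')
      · rw [hfv, hfU a h1 h1'] at hab; rw [← hab] at hy; exact absurd hy (hUS a h1 h1')
      · rw [hfu, hfU a h1 h1'] at hab; rw [← hab] at hx; exact absurd hx (hUS a h1 h1')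
      · have h3 := (hKne _ (hfK b h2)).2.2
        rw [← hab, hfU a h1 h1'] at h3; exact absurd h3 (hUS a h1 h1')
      · rw [hfU a h1 h1', hfU b h2 h2'] at hab; exact π₀.injective hab
    obtain ⟨g, hg⟩ := Finset.exists_equiv_extend_of_card_eq (α := Fin n) (t := (univ : Finset (Fin n)))
      (by simp) (s := insert v (N' ∪ U)) (f := f) (subset_univ _) hinj
    exact ⟨g.trans (Equiv.subtypeUnivEquiv (fun x => mem_univ x)), fun b hb => by simp [hg b hb]⟩
  have hH := H ρ (fun a ha hau => by rw [hρ a (by simp [ha]), hfU a ha hau])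
    (by rw [hρ u (by simp [hu]), hfu]) (by rw [hρ v (by simp), hfv])
  let g : Fin n → ℤ := fun w => c s(y, w) - c s(x, w)
  have hg2 : ∀ w, w ≠ x → w ≠ y → g w ≤ 2 := by
    intro w h1 h2
    rcases hc x w h1.symm with h | h <;> rcases hc y w h2.symm with h' | h' <;> simp [g, h, h']
  have hg0 : ∀ w ∈ M, g w ≤ 0 := by
    intro w hw
    simp only [hM, hP, mem_filter, mem_sdiff, mem_insert, mem_singleton, not_or] at hw
    obtain ⟨⟨_, h1, h2⟩, h3⟩ := hw
    rcases hc x w (Ne.symm h1) with h | h <;> rcases hc y w (Ne.symm h2) with h' | h' <;>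
      simp [g, h, h'] at h3 ⊢
  have hρx : ρ u = x := by rw [hρ u (by simp [hu]), hfu]
  have hρy : ρ v = y := by rw [hρ v (by simp), hfv]
  have hsum : (∑ b ∈ univ \ {u, v}, (if F.Adj u b then 1 else 0) * (c s(y, ρ b) - c s(x, ρ b)) : ℤ)
      ≤ ∑ w ∈ K, g w + 2 * (U.filter (fun b => F.Adj u b)).card := by
    have e1 : ∑ w ∈ K, g w = ∑ b ∈ N', g (ρ b) := by
      symm
      apply Finset.sum_bij (fun b _ => ρ b)
      · intro b hb; rw [hρ b (by simp [hb])]; exact hfK b hb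
      · intro a _ b _ h; exact ρ.injective h
      · intro w hw
        refine ⟨(E.symm ⟨w, hw⟩ : Fin n), (E.symm ⟨w, hw⟩).2, ?_⟩
        rw [hρ _ (by simp), hfN _ (E.symm ⟨w, hw⟩).2]
        simp
      · intro b _; rfl
    have e2 : (∑ b ∈ univ \ {u, v}, (if F.Adj u b then 1 else 0) * (c s(y, ρ b) - c s(x, ρ b)) : ℤ)
        = ∑ b ∈ N', g (ρ b) + ∑ b ∈ U.filter (fun b => F.Adj u b), g (ρ b) := by
      rw [← Finset.sum_union]
      · simp only [ite_mul, one_mul, zero_mul]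
        rw [← Finset.sum_filter]
        apply Finset.sum_congr _ (fun _ _ => rfl)
        ext b
        simp only [hN', mem_filter, mem_sdiff, mem_univ, true_and, mem_insert, mem_singleton, mem_union]
        have h1 : F.Adj u b → b ≠ u := fun h => h.ne'
        have h2 : b ∈ U → b ≠ v := by rintro h rfl; exact hv h
        tauto
      · rw [Finset.disjoint_left]
        intro b h1 h2
        simp only [hN', mem_filter] at h1 h2
        exact h1.2.2.1 h2.1
    rw [e2, e1]
    have e3 : ∑ b ∈ U.filter (fun b => F.Adj u b), g (ρ b) ≤
        ∑ b ∈ U.filter (fun b => F.Adj u b), 2 := by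
      apply Finset.sum_le_sum
      intro b hb
      simp only [mem_filter] at hb
      apply hg2
      · rw [← hρx]; exact fun h => hb.2.ne' (ρ.injective h)
      · rw [← hρy]; exact fun h => hv ((ρ.injective h) ▸ hb.1)
    rw [Finset.sum_const, nsmul_eq_mul] at e3
    linarith
  have hsumR : (((∑ b ∈ univ \ {u, v}, (if F.Adj u b then 1 else 0) *
      (c s(y, ρ b) - c s(x, ρ b)) : ℤ)) : ℝ)
      ≤ ((∑ w ∈ K, g w : ℤ) : ℝ) + 2 * ((U.filter (fun b => F.Adj u b)).card : ℝ) := by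
    exact_mod_cast hsum
  rcases hKM with hKM | hKM
  · exfalso
    have h1 : ∑ w ∈ K, g w ≤ 0 := Finset.sum_nonpos (fun w hw => hg0 w (hKM hw))
    have h2 : ((∑ w ∈ K, g w : ℤ) : ℝ) ≤ 0 := by exact_mod_cast h1
    have h3 : ((U.filter (fun b => F.Adj u b)).card : ℝ) ≤ 1 := by exact_mod_cast hU1
    linarith
  · have h1 : ∑ w ∈ K, g w ≤ 2 * (K \ M).card := by
      rw [← Finset.sum_sdiff hKM]
      have h2 : ∑ w ∈ M, g w ≤ 0 := Finset.sum_nonpos hg0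
      have h3 : ∑ w ∈ K \ M, g w ≤ ∑ w ∈ K \ M, 2 :=
        Finset.sum_le_sum (fun w hw => by
          have := hKne w (mem_sdiff.1 hw).1
          exact hg2 w this.1 this.2.1)
      rw [Finset.sum_const, nsmul_eq_mul] at h3
      linarith
    have h2 := Finset.card_sdiff_add_card_eq_card hKM
    have h3 : N'.card + (U.filter (fun b => F.Adj u b)).card ≤ F.degree u := by
      rw [← Finset.card_union_of_disjoint, ← SimpleGraph.card_neighborFinset_eq_degree]
      · apply Finset.card_le_card
        intro b hb
        simp only [hN', mem_union, mem_filter, SimpleGraph.mem_neighborFinset] at hb ⊢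
        tauto
      · rw [Finset.disjoint_left]
        intro b h1 h2
        simp only [hN', mem_filter] at h1 h2
        exact h1.2.2.1 h2.1
    have h1' : ((∑ w ∈ K, g w : ℤ) : ℝ) ≤ 2 * ((K \ M).card : ℝ) := by exact_mod_cast h1
    have h2' : ((K \ M).card : ℝ) + M.card = N'.card := by rw [← hKc]; exact_mod_cast h2
    have h3' : (N'.card : ℝ) + ((U.filter (fun b => F.Adj u b)).card : ℝ) ≤ F.degree u := by
      exact_mod_cast h3
    linarith

lemma swap_diff_le {n : ℕ} (F : SimpleGraph (Fin n)) [DecidableRel F.Adj] (c : Sym2 (Fin n) → ℤ)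
    (hc : ∀ a b : Fin n, a ≠ b → c s(a, b) = 1 ∨ c s(a, b) = -1)
    (π : Equiv.Perm (Fin n)) (u v : Fin n) (huv : u ≠ v) :
    |fval F c (π * Equiv.swap u v) - fval F c π -
      ∑ b ∈ univ \ {u, v}, (if F.Adj u b then 1 else 0) * (c s(π v, π b) - c s(π u, π b))| ≤
      2 * F.degree v ∧
    |∑ b ∈ univ \ {u, v}, (if F.Adj u b then 1 else 0) * (c s(π v, π b) - c s(π u, π b))| ≤
      2 * F.degree u := by
  have key : ∀ z : Fin n, |∑ b ∈ univ \ {u, v}, (if F.Adj z b then 1 else 0) *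
      (c s(π v, π b) - c s(π u, π b))| ≤ 2 * F.degree z := by
    intro z
    refine (Finset.abs_sum_le_sum_abs _ _).trans ?_
    have h1 : ∀ b ∈ univ \ {u, v}, |(if F.Adj z b then 1 else 0) * (c s(π v, π b) - c s(π u, π b))|
        ≤ if F.Adj z b then 2 else 0 := by
      intro b hb
      simp only [mem_sdiff, mem_univ, mem_insert, mem_singleton, true_and, not_or] at hb
      split_ifs
      · rcases hc (π v) (π b) (fun h => hb.2 (π.injective h).symm) with h | h <;>
        rcases hc (π u) (π b) (fun h => hb.1 (π.injective h).symm) with h' | h' <;> simp [h, h'] <;> norm_num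
      · simp
    refine (Finset.sum_le_sum h1).trans ?_
    refine (Finset.sum_le_sum_of_subset_of_nonneg (subset_univ _) (fun b _ _ => by
      split_ifs <;> norm_num)).trans ?_
    rw [← Finset.sum_filter, Finset.sum_const, nsmul_eq_mul, ← SimpleGraph.neighborFinset_eq_filter,
      SimpleGraph.card_neighborFinset_eq_degree]
    linarith
  refine ⟨?_, key u⟩
  rw [fval_swap F c π u v huv, ← Finset.sum_sub_distrib]
  have := key v
  rw [← abs_neg, ← Finset.sum_neg_distrib] at this
  convert this using 3
  ring

theorem main {n : ℕ} (F : SimpleGraph (Fin n)) [DecidableRel F.Adj] (hn : 0 < n)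
    (hF : F.IsAcyclic) (c : Sym2 (Fin n) → ℤ)
    (hc : ∀ a b : Fin n, a ≠ b → c s(a, b) = 1 ∨ c s(a, b) = -1)
    (hbal : ∑ e ∈ (⊤ : SimpleGraph (Fin n)).edgeFinset, c e = 0) (t : ℝ) (ht : 1 ≤ t)
    (hteq : t * (t - ((F.maxDegree : ℝ) - n / 4 + 1)) = 4 * n)
    (hB : ∀ π, t + 1 < |((fval F c π : ℤ) : ℝ)|) : False := by
  classical
  have hnR : (0 : ℝ) < n := by exact_mod_cast hn
  haveI : Nonempty (Fin n) := ⟨⟨0, hn⟩⟩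
  -- leaf
  obtain ⟨v, -, hv⟩ := acyclic_low F hF univ univ_nonempty
  have hv : F.degree v ≤ 1 := by
    rwa [← SimpleGraph.neighborFinset_eq_filter, SimpleGraph.card_neighborFinset_eq_degree] at hv
  have hvR : (F.degree v : ℝ) ≤ 1 := by exact_mod_cast hv
  have hpos : ∀ π, 0 < fval F c π → t + 1 < ((fval F c π : ℤ) : ℝ) := by
    intro π h
    have h1 := hB π
    rwa [abs_of_pos (by exact_mod_cast h)] at h1
  have hneg : ∀ π, ¬ 0 < fval F c π → ((fval F c π : ℤ) : ℝ) < -(t + 1) := by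
    intro π h
    have h1 := hB π
    rw [abs_of_nonpos (by exact_mod_cast not_lt.1 h)] at h1
    linarith
  let G : Subgroup (Equiv.Perm (Fin n)) :=
    { carrier := {g | ∀ π, 0 < fval F c (π * g) ↔ 0 < fval F c π}
      one_mem' := by intro π; simp
      mul_mem' := by
        intro a b ha hb π
        rw [← mul_assoc, hb, ha]
      inv_mem' := by
        intro a ha π
        rw [← ha (π * a⁻¹)]
        simp }
  have hGm : ∀ g, g ∈ G ↔ ∀ π, 0 < fval F c (π * g) ↔ 0 < fval F c π := fun g => Iff.rfl
  let U : Finset (Fin n) := univ.filter (fun a => Equiv.swap a v ∉ G)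
  have hUmem : ∀ a, a ∈ U ↔ Equiv.swap a v ∉ G := fun a => by simp [U]
  have hUfree : ∀ a ∉ U, Equiv.swap a v ∈ G := fun a ha => by
    rw [hUmem, not_not] at ha; exact ha
  have hvU : v ∉ U := by
    rw [hUmem, not_not, Equiv.swap_self]; exact G.one_mem
  -- reorient a jump
  have hjump : ∀ a, a ∈ U → ∃ π, ¬ 0 < fval F c π ∧ 0 < fval F c (π * Equiv.swap a v) := by
    intro a ha
    rw [hUmem, hGm] at ha
    push Not at ha
    obtain ⟨π, h | h⟩ := ha
    · exact ⟨π, not_lt.2 h.2, h.1⟩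
    · refine ⟨π * Equiv.swap a v, not_lt.2 h.1, ?_⟩
      rw [mul_assoc, Equiv.swap_mul_self, mul_one]; exact h.2
  have hne : ∀ a ∈ U, a ≠ v := by rintro a ha rfl; exact hvU ha
  have hjs : ∀ a, a ≠ v → ∀ π, ¬ 0 < fval F c π → 0 < fval F c (π * Equiv.swap a v) →
      2 * t < ((∑ b ∈ univ \ {a, v}, (if F.Adj a b then 1 else 0) *
        (c s(π v, π b) - c s(π a, π b)) : ℤ) : ℝ) := by
    intro a hav π h1 h2
    have h3 := (swap_diff_le F c hc π a v hav).1
    have h4 := hneg π h1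
    have h5 := hpos _ h2
    have h6 := (abs_le.1 h3).2
    have h7 : ((fval F c (π * Equiv.swap a v) : ℤ) : ℝ) - ((fval F c π : ℤ) : ℝ) -
      ((∑ b ∈ univ \ {a, v}, (if F.Adj a b then 1 else 0) *
        (c s(π v, π b) - c s(π a, π b)) : ℤ) : ℝ) ≤ 2 * F.degree v := by exact_mod_cast h6
    linarith
  have hUdeg : ∀ a ∈ U, t ≤ F.degree a := by
    intro a ha
    obtain ⟨π, h1, h2⟩ := hjump a ha
    have h3 := hjs a (hne a ha) π h1 h2
    have h4 := (abs_le.1 (swap_diff_le F c hc π a v (hne a ha)).2).2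
    have h5 : ((∑ b ∈ univ \ {a, v}, (if F.Adj a b then 1 else 0) *
        (c s(π v, π b) - c s(π a, π b)) : ℤ) : ℝ) ≤ 2 * F.degree a := by exact_mod_cast h4
    linarith
  have hht : U.card * t ≤ 2 * n := by
    have h1 : U.card * t ≤ ∑ a ∈ U, (F.degree a : ℝ) := by
      rw [← nsmul_eq_mul]; exact Finset.card_nsmul_le_sum _ _ _ hUdeg
    have h2 : ∑ a ∈ U, (F.degree a : ℝ) ≤ ∑ a, (F.degree a : ℝ) :=
      Finset.sum_le_sum_of_subset_of_nonneg (subset_univ _) (fun _ _ _ => by positivity)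
    have h3 := F.sum_degrees_eq_twice_card_edges
    have h4 := acyclic_card F hF
    rw [Fintype.card_fin] at h4
    have h5 : ∑ a, (F.degree a : ℝ) ≤ 2 * n := by
      have : ∑ a, F.degree a ≤ 2 * n := by omega
      exact_mod_cast this
    linarith
  rcases U.eq_empty_or_nonempty with hUe | hUne
  · have hall : ∀ g, g ∈ G := fun g => perm_mem G v U hUfree _ g rfl (by simp [hUe])
    have hsame : ∀ π, 0 < fval F c π ↔ 0 < fval F c 1 := by
      intro π
      have := (hGm π).1 (hall π) 1
      rwa [one_mul] at this
    have havg := fval_avg F c hbal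
    by_cases h : 0 < fval F c 1
    · have : 0 < ∑ π : Equiv.Perm (Fin n), fval F c π :=
        Finset.sum_pos (fun π _ => (hsame π).2 h) univ_nonempty
      omega
    · have : ∑ π : Equiv.Perm (Fin n), fval F c π < 0 := by
        apply Finset.sum_neg
        · intro π _
          have h1 := hneg π (fun h' => h ((hsame π).1 h'))
          have : ((fval F c π : ℤ) : ℝ) < 0 := by linarith
          exact_mod_cast this
        · exact univ_nonempty
      omega
  · obtain ⟨u, hu, hu1⟩ := acyclic_low F hF U hUne
    have huv := hne u hu
    obtain ⟨π₀, h1, h2⟩ := hjump u hu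
    let Q : Equiv.Perm (Fin n) → Prop := fun ρ => ∀ a ∈ U, a ≠ u → ρ a = π₀ a
    have hQ : ∀ ρ ρ', Q ρ → Q ρ' → ρ u = ρ' u → (0 < fval F c ρ ↔ 0 < fval F c ρ') := by
      intro ρ ρ' h h' hu'
      have hm : ρ'⁻¹ * ρ ∈ G := perm_mem G v U hUfree _ _ rfl (by
        intro a ha
        rw [Equiv.Perm.mul_apply, Equiv.Perm.inv_eq_iff_eq]
        by_cases hau : a = u
        · rw [hau, hu']
        · rw [h a ha hau, h' a ha hau])
      have := (hGm _).1 hm ρ'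
      rwa [mul_inv_cancel_left] at this
    have hQ0 : Q π₀ := fun a _ _ => rfl
    have hQs : ∀ ρ, Q ρ → Q (ρ * Equiv.swap u v) := by
      intro ρ h a ha hau
      rw [Equiv.Perm.mul_apply, Equiv.swap_apply_of_ne_of_ne hau (hne a ha)]
      exact h a ha hau
    let T := (U.erase u).image π₀
    let S := univ \ T
    let Y := S.filter (fun p => ∃ ρ, Q ρ ∧ ρ u = p ∧ 0 < fval F c ρ)
    let X := S.filter (fun p => ¬ ∃ ρ, Q ρ ∧ ρ u = p ∧ 0 < fval F c ρ)
    have hXYS : X ∪ Y = S := by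
      rw [Finset.union_comm]; exact Finset.filter_union_filter_not_eq _ _
    have hmemS : ∀ b, b ∉ U.erase u → π₀ b ∈ S := by
      intro b hb
      simp only [S, T, mem_sdiff, mem_univ, true_and, mem_image, not_exists, not_and]
      intro a ha h
      exact hb (π₀.injective h ▸ ha)
    have hXn : X.Nonempty := by
      refine ⟨π₀ u, mem_filter.2 ⟨hmemS u (by simp), ?_⟩⟩
      rintro ⟨ρ, hr, hru, hrp⟩
      exact h1 ((hQ ρ π₀ hr hQ0 hru).1 hrp)
    have hYn : Y.Nonempty := by
      refine ⟨π₀ v, mem_filter.2 ⟨hmemS v (by simp [hvU]), π₀ * Equiv.swap u v, hQs _ hQ0, ?_, h2⟩⟩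
      simp
    have hdis : Disjoint X Y := (Finset.disjoint_filter_filter_not S S _).symm
    have hcov : ∀ a, a ∈ X ∨ a ∈ Y ∨ a ∈ T := by
      intro a
      by_cases ha : a ∈ T
      · exact Or.inr (Or.inr ha)
      · have : a ∈ X ∪ Y := by rw [hXYS]; simp [S, ha]
        rw [mem_union] at this
        tauto
    have hfin := count_bound' c hc hbal X Y T hXn hYn hdis hcov (F.degree u - t) (by
      intro x hx y hy
      rw [hXYS]
      have hxy : x ≠ y := Finset.disjoint_iff_ne.1 hdis x hx y hy
      refine pair_bound F c hc U u v hu hvU hu1 π₀ S rfl x y (mem_filter.1 hx).1 (mem_filter.1 hy).1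
        hxy t ht ?_
      intro ρ hr hrx hry
      have hn1 : ¬ 0 < fval F c ρ := fun h => (mem_filter.1 hx).2 ⟨ρ, hr, hrx, h⟩
      have hp1 : 0 < fval F c (ρ * Equiv.swap u v) := by
        obtain ⟨ρ', hr', hru', hrp'⟩ := (mem_filter.1 hy).2
        refine (hQ _ ρ' (hQs ρ hr) hr' ?_).2 hrp'
        simp [hru', hry]
      have := hjs u huv ρ hn1 hp1
      rwa [hrx, hry] at this)
    have hT : (T.card : ℝ) + 1 = U.card := by
      have h3 : T.card = (U.erase u).card := Finset.card_image_of_injective _ π₀.injective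
      have h4 := Finset.card_erase_add_one hu
      rw [← h3] at h4
      exact_mod_cast h4
    have hd : (F.degree u : ℝ) ≤ F.maxDegree := by exact_mod_cast F.degree_le_maxDegree u
    have hh : (U.card : ℝ) ≤ t - ((F.maxDegree : ℝ) - n / 4 + 1) := by
      have h3 : t * U.card ≤ t * (t - ((F.maxDegree : ℝ) - n / 4 + 1)) := by
        rw [hteq]; linarith
      exact le_of_mul_le_mul_left h3 (by linarith)
    have hK : (F.degree u : ℝ) - t + 1 + T.card ≤ n / 4 - 1 := by linarith
    have h6 : 2 * (n : ℝ) * (F.degree u - t + 1 + T.card) ≤ 2 * n * (n / 4 - 1) :=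
      mul_le_mul_of_nonneg_left hK (by linarith)
    nlinarith

end ABSF

/-- If `c` is a balanced `±1`-colouring of the edges of `K_n` and `F`
is a forest on `n` vertices with maximum degree `Δ` satisfying `15 < Δ < n/2`, then
there is a copy `F'` of `F` in `K_n` with
`|c(F')| ≤ (Δ - n/4 + 3)/2 + √((Δ - n/4 + 1)²/4 + 4n)`. -/
theorem almost_balanced_spanning_forest_middle_degree
    (n : ℕ) (F : SimpleGraph (Fin n)) [DecidableRel F.Adj]
    (hF : F.IsAcyclic) (Δ : ℕ) (hΔ : F.maxDegree = Δ)
    (hdeg₁ : 15 < Δ) (hdeg₂ : (Δ : ℝ) < (n : ℝ) / 2)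
    (c : Sym2 (Fin n) → ℤ)
    (hc : ∀ e ∈ (⊤ : SimpleGraph (Fin n)).edgeFinset, c e = 1 ∨ c e = -1)
    (hbal : ∑ e ∈ (⊤ : SimpleGraph (Fin n)).edgeFinset, c e = 0) :
    ∃ f : Fin n ↪ Fin n,
      |(∑ e ∈ F.edgeFinset, c (Sym2.map (⇑f) e) : ℝ)| ≤
        ((Δ : ℝ) - (n : ℝ) / 4 + 3) / 2 +
          Real.sqrt (((Δ : ℝ) - (n : ℝ) / 4 + 1) ^ 2 / 4 + 4 * n) := by
  classical
  have hn : 0 < n := by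
    rcases Nat.eq_zero_or_pos n with h | h
    · subst h
      have : (0 : ℝ) ≤ Δ := by positivity
      norm_num at hdeg₂
      linarith
    · exact h
  have hnR : (1 : ℝ) ≤ n := by exact_mod_cast hn
  by_contra hcon
  push Not at hcon
  set D : ℝ := (Δ : ℝ) - (n : ℝ) / 4 + 1 with hD
  set r := Real.sqrt (D ^ 2 / 4 + 4 * n) with hr
  have hr2 : r ^ 2 = D ^ 2 / 4 + 4 * n := Real.sq_sqrt (by positivity)
  have hr0 : 0 ≤ r := Real.sqrt_nonneg _
  have hΔ0 : (0 : ℝ) ≤ Δ := by positivity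
  have ht : 1 ≤ D / 2 + r := by
    by_contra hlt
    push Not at hlt
    have h1 : r < 1 - D / 2 := by linarith
    have h2 : r ^ 2 < (1 - D / 2) ^ 2 := by
      apply pow_lt_pow_left₀ h1 hr0; norm_num
    nlinarith
  refine ABSF.main F hn hF c ?_ hbal (D / 2 + r) ht ?_ ?_
  · intro a b hab
    exact hc s(a, b) (by simpa using hab)
  · rw [hΔ, ← hD]; nlinarith
  · intro π
    have := hcon π.toEmbedding
    have e : ((ABSF.fval F c π : ℤ) : ℝ) =
        ∑ e ∈ F.edgeFinset, ((c (Sym2.map (⇑π.toEmbedding) e) : ℤ) : ℝ) := by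
      simp [ABSF.fval]
    rw [e]
    refine lt_of_le_of_lt (le_of_eq ?_) this
    rw [hD]; ring
end
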